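/- arXiv:1604.08639 — 6 statements merged into one kernel-verified Lean document; each statement's English description precedes it below -/
import Mathlib

section
/- Let R be a commutative ring with identity. If R has stable rank 1, i.e., for all a, b ∈ R with aR + bR = R there exists t ∈ R such that a + bt is a unit, then R is a generalized Euclidean ring: SL_n(R) = E_n(R) for every n ≥ 2. -/
/-- The set of `n × n` elementary matrices over `R`: matrices differing from the
identity by a single off-diagonal entry. -/
def ElemMatrices (n : ℕ) (R : Type*) [CommRing R] : Set (Matrix (Fin n) (Fin n) R) :=
  {M | ∃ (i j : Fin n) (c : R), i ≠ j ∧ M = Matrix.transvection i j c}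

/-- `R` is a `GE_n`-ring: every matrix of determinant one is a product of
elementary matrices, i.e. `SL_n(R) = E_n(R)`. -/
def IsGE (R : Type*) [CommRing R] (n : ℕ) : Prop :=
  ∀ A : Matrix (Fin n) (Fin n) R, A.det = 1 → A ∈ Submonoid.closure (ElemMatrices n R)

/-- `R` is a generalized Euclidean ring: a `GE_n`-ring for every `n ≥ 2`. -/
def IsGERing (R : Type*) [CommRing R] : Prop := ∀ n, 2 ≤ n → IsGE R n

/-!
A column of a matrix of determinant one is unimodular. Over a ring of stable rank one, elementary
operations carry every unimodular column with at least two entries to a standard basis vector.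
Writing the column in blocks `(v, a)` with `a` a single entry, stable rank one makes `a` a unit `u`,
and a unimodular block allows the other block to be replaced by anything:
`(v, a) ↦ (v, u) ↦ (1, u) ↦ (1, 1) ↦ (0, 1)`.
The matrix has then become `[D 0; c 1] = [D 0; 0 1] [1 0; c 1]`, whose first factor is elementary by
induction on the size.
-/

open Matrix

section Unimodular

variable {R m n ι : Type*} [CommRing R] [Fintype m] [Fintype ι]

/-- A vector is unimodular if its entries generate the unit ideal, that is, if some linear
combination of them is `1`. -/
def IsUnimodular (x : ι → R) : Prop := ∃ y : ι → R, y ⬝ᵥ x = 1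

lemma isUnimodular_of_isUnit_apply {x : ι → R} {i : ι} (h : IsUnit (x i)) : IsUnimodular x := by
  classical
  obtain ⟨u, hu⟩ := h
  exact ⟨Pi.single i ↑u⁻¹, by rw [single_dotProduct, ← hu, u.inv_mul]⟩

lemma isUnimodular_one [Nonempty ι] : IsUnimodular (1 : ι → R) :=
  isUnimodular_of_isUnit_apply (i := Classical.arbitrary ι) isUnit_one

lemma isUnimodular_col_of_det_eq_one [DecidableEq ι] {A : Matrix ι ι R} (hA : A.det = 1) (j : ι) :
    IsUnimodular (A.col j) := by
  refine ⟨A.adjugate j, ?_⟩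
  have h : (A.adjugate * A) j j = 1 := by rw [adjugate_mul, hA, one_smul, one_apply_eq]
  exact h

lemma IsUnimodular.exists_mulVec_eq {v : m → R} (hv : IsUnimodular v) (a : n → R) :
    ∃ C : Matrix n m R, C *ᵥ v = a := by
  obtain ⟨y, hy⟩ := hv
  exact ⟨vecMulVec a y, by simp [vecMulVec_mulVec, hy]⟩

/-- Stable rank one in the sense of Bass: every unimodular pair can be shortened to a unit. -/
def HasStableRankOne (R : Type*) [CommRing R] : Prop :=
  ∀ a b : R, Ideal.span ({a, b} : Set R) = ⊤ → ∃ t : R, IsUnit (a + b * t)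

lemma HasStableRankOne.exists_isUnit_add_dotProduct (hR : HasStableRankOne R) {v : m → R} {a : R}
    (h : IsUnimodular (Sum.elim v fun _ : Unit ↦ a)) : ∃ w : m → R, IsUnit (a + w ⬝ᵥ v) := by
  obtain ⟨y, hy⟩ := h
  have hspan : y (Sum.inr ()) * a + 1 * ((y ∘ Sum.inl) ⬝ᵥ v) = 1 := by
    simpa [dotProduct, add_comm] using hy
  obtain ⟨t, ht⟩ := hR a ((y ∘ Sum.inl) ⬝ᵥ v)
    ((Ideal.eq_top_iff_one _).2 (Ideal.mem_span_pair.2 ⟨_, _, hspan⟩))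
  exact ⟨t • (y ∘ Sum.inl), by rwa [smul_dotProduct, smul_eq_mul, mul_comm]⟩

end Unimodular

section Elementary

variable {R m n ι : Type*} [CommRing R] [Fintype m] [DecidableEq m] [Fintype n] [DecidableEq n]
  [Fintype ι] [DecidableEq ι]

/-- The elementary group `E_ι(R)`, for any finite index type `ι`. It is encoded as a submonoid of
the matrix ring, like `IsGE`; this is enough because the inverse of a transvection is again a
transvection. -/
def elementaryMonoid (ι R : Type*) [Fintype ι] [DecidableEq ι] [CommRing R] :
    Submonoid (Matrix ι ι R) :=
  Submonoid.closure (Set.range TransvectionStruct.toMatrix)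

lemma range_toMatrix_eq_elemMatrices (k : ℕ) :
    Set.range (TransvectionStruct.toMatrix (n := Fin k) (R := R)) = ElemMatrices k R := by
  ext M
  constructor
  · rintro ⟨⟨i, j, hij, c⟩, rfl⟩
    exact ⟨i, j, c, hij, rfl⟩
  · rintro ⟨i, j, c, hij, rfl⟩
    exact ⟨⟨i, j, hij, c⟩, rfl⟩

namespace elementaryMonoid

lemma toMatrix_mem (t : TransvectionStruct ι R) : t.toMatrix ∈ elementaryMonoid ι R :=
  Submonoid.subset_closure ⟨t, rfl⟩

lemma det_eq_one {A : Matrix ι ι R} (hA : A ∈ elementaryMonoid ι R) : A.det = 1 := by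
  induction hA using Submonoid.closure_induction with
  | mem _ ht =>
    obtain ⟨t, rfl⟩ := ht
    exact t.det
  | one => exact det_one
  | mul _ _ _ _ hA hB => rw [det_mul, hA, hB, one_mul]

lemma mem_of_mul_mem {g A : Matrix ι ι R} (hg : g ∈ elementaryMonoid ι R)
    (hgA : g * A ∈ elementaryMonoid ι R) : A ∈ elementaryMonoid ι R := by
  induction hg using Submonoid.closure_induction generalizing A with
  | mem _ ht =>
    obtain ⟨t, rfl⟩ := ht
    simpa only [← mul_assoc, t.inv_mul, one_mul] using mul_mem (toMatrix_mem t.inv) hgA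
  | one => rwa [one_mul] at hgA
  | mul g h _ _ ihg ihh => exact ihh (ihg (by rwa [← mul_assoc]))

lemma reindexAlgEquiv_mem (e : m ≃ n) {A : Matrix m m R} (hA : A ∈ elementaryMonoid m R) :
    reindexAlgEquiv R R e A ∈ elementaryMonoid n R := by
  induction hA using Submonoid.closure_induction with
  | mem _ ht =>
    obtain ⟨t, rfl⟩ := ht
    exact t.toMatrix_reindexEquiv e ▸ toMatrix_mem (t.reindexEquiv e)
  | one => exact map_one (reindexAlgEquiv R R e) ▸ one_mem _
  | mul A B _ _ hA hB => exact map_mul (reindexAlgEquiv R R e) A B ▸ mul_mem hA hB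

lemma reindexAlgEquiv_mem_iff (e : m ≃ n) {A : Matrix m m R} :
    reindexAlgEquiv R R e A ∈ elementaryMonoid n R ↔ A ∈ elementaryMonoid m R :=
  ⟨fun h ↦ by simpa using reindexAlgEquiv_mem e.symm h, reindexAlgEquiv_mem e⟩

lemma fromBlocks_diagonal_one_mem {D : Matrix m m R} (hD : D ∈ elementaryMonoid m R) :
    fromBlocks D 0 0 (1 : Matrix n n R) ∈ elementaryMonoid (m ⊕ n) R := by
  induction hD using Submonoid.closure_induction with
  | mem _ ht =>
    obtain ⟨t, rfl⟩ := ht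
    exact t.toMatrix_sumInl n ▸ toMatrix_mem (t.sumInl n)
  | one =>
    rw [fromBlocks_one]
    exact one_mem _
  | mul A B _ _ hA hB => simpa [fromBlocks_multiply] using mul_mem hA hB

lemma fromBlocks_lower_unitriangular_mem (C : Matrix n m R) :
    fromBlocks (1 : Matrix m m R) 0 C (1 : Matrix n n R) ∈ elementaryMonoid (m ⊕ n) R := by
  induction C using Matrix.induction_on' with
  | h_zero =>
    rw [fromBlocks_one]
    exact one_mem _
  | h_add C C' hC hC' => simpa [fromBlocks_multiply, add_comm] using mul_mem hC hC'
  | h_std_basis i j c =>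
    convert toMatrix_mem ⟨Sum.inr i, Sum.inl j, Sum.inr_ne_inl, c⟩
    ext (k | k) (l | l) <;> simp [transvection, single_apply, one_apply]

lemma fromBlocks_upper_unitriangular_mem (B : Matrix m n R) :
    fromBlocks (1 : Matrix m m R) B 0 (1 : Matrix n n R) ∈ elementaryMonoid (m ⊕ n) R := by
  simpa using reindexAlgEquiv_mem (Equiv.sumComm n m) (fromBlocks_lower_unitriangular_mem B)

lemma fromBlocks_zero₁₂_one_mem {D : Matrix m m R} (hD : D ∈ elementaryMonoid m R)
    (C : Matrix n m R) : fromBlocks D 0 C (1 : Matrix n n R) ∈ elementaryMonoid (m ⊕ n) R := by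
  simpa [fromBlocks_multiply] using
    mul_mem (fromBlocks_diagonal_one_mem (n := n) hD) (fromBlocks_lower_unitriangular_mem C)

lemma mem_of_det_eq_one_of_subsingleton [Subsingleton ι] {A : Matrix ι ι R} (hA : A.det = 1) :
    A ∈ elementaryMonoid ι R := by
  let A' : SpecialLinearGroup ι R := ⟨A, hA⟩
  have h : A = 1 := congrArg Subtype.val (Subsingleton.elim A' 1)
  exact h ▸ one_mem _

lemma mem_of_col_eq {A : Matrix (m ⊕ Unit) (m ⊕ Unit) R}
    (hm : ∀ D : Matrix m m R, D.det = 1 → D ∈ elementaryMonoid m R) (hA : A.det = 1)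
    (hcol : A.col (Sum.inr ()) = Sum.elim (0 : m → R) (1 : Unit → R)) :
    A ∈ elementaryMonoid (m ⊕ Unit) R := by
  have hblocks : A = fromBlocks A.toBlocks₁₁ 0 A.toBlocks₂₁ 1 := by
    ext i (j | j)
    · cases i <;> rfl
    · exact (congrFun hcol i).trans (by cases i <;> simp)
  rw [hblocks, det_fromBlocks_zero₁₂, det_one, mul_one] at hA
  rw [hblocks]
  exact fromBlocks_zero₁₂_one_mem (hm _ hA) _

end elementaryMonoid

/-- The vector `y` is obtained from `x` by elementary operations: `E_ι(R)` moves `x` to `y`. -/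
def ElementaryEquiv (x y : ι → R) : Prop := ∃ g ∈ elementaryMonoid ι R, g *ᵥ x = y

namespace ElementaryEquiv

instance : Trans (ElementaryEquiv (R := R) (ι := ι)) ElementaryEquiv ElementaryEquiv where
  trans := by
    rintro x _ _ ⟨g, hg, rfl⟩ ⟨h, hh, rfl⟩
    exact ⟨h * g, mul_mem hh hg, (mulVec_mulVec x h g).symm⟩

lemma elim_add_mulVec_right (v : m → R) (a : n → R) (C : Matrix n m R) :
    ElementaryEquiv (Sum.elim v a) (Sum.elim v (a + C *ᵥ v)) :=
  ⟨_, elementaryMonoid.fromBlocks_lower_unitriangular_mem C,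
    by simp [fromBlocks_mulVec, add_comm]⟩

lemma elim_add_mulVec_left (v : m → R) (a : n → R) (B : Matrix m n R) :
    ElementaryEquiv (Sum.elim v a) (Sum.elim (v + B *ᵥ a) a) :=
  ⟨_, elementaryMonoid.fromBlocks_upper_unitriangular_mem B, by simp [fromBlocks_mulVec]⟩

lemma elim_right_of_isUnimodular {v : m → R} (hv : IsUnimodular v) (a b : n → R) :
    ElementaryEquiv (Sum.elim v a) (Sum.elim v b) := by
  obtain ⟨C, hC⟩ := hv.exists_mulVec_eq (b - a)
  simpa [hC] using elim_add_mulVec_right v a C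

lemma elim_left_of_isUnimodular {a : n → R} (ha : IsUnimodular a) (v w : m → R) :
    ElementaryEquiv (Sum.elim v a) (Sum.elim w a) := by
  obtain ⟨B, hB⟩ := ha.exists_mulVec_eq (w - v)
  simpa [hB] using elim_add_mulVec_left v a B

end ElementaryEquiv

namespace HasStableRankOne

theorem elementaryEquiv_elim_zero_one [Nonempty m] (hR : HasStableRankOne R)
    {x : m ⊕ Unit → R} (hx : IsUnimodular x) :
    ElementaryEquiv x (Sum.elim (0 : m → R) (1 : Unit → R)) := by
  obtain ⟨v, a, rfl⟩ : ∃ (v : m → R) (a : R), x = Sum.elim v fun _ ↦ a :=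
    ⟨x ∘ Sum.inl, x (Sum.inr ()), by ext (i | i) <;> rfl⟩
  obtain ⟨w, hw⟩ := hR.exists_isUnit_add_dotProduct hx
  let u : Unit → R := fun _ ↦ a + w ⬝ᵥ v
  have hu : IsUnimodular u := isUnimodular_of_isUnit_apply (i := ()) hw
  calc
    ElementaryEquiv (Sum.elim v fun _ ↦ a) (Sum.elim v u) :=
      ElementaryEquiv.elim_add_mulVec_right v _ (of fun _ ↦ w)
    ElementaryEquiv _ (Sum.elim 1 u) := .elim_left_of_isUnimodular hu v 1
    ElementaryEquiv _ (Sum.elim 1 1) := .elim_right_of_isUnimodular isUnimodular_one u 1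
    ElementaryEquiv _ (Sum.elim 0 1) := .elim_left_of_isUnimodular isUnimodular_one 1 0

lemma mem_elementaryMonoid_sum_unit (hR : HasStableRankOne R)
    (hm : ∀ D : Matrix m m R, D.det = 1 → D ∈ elementaryMonoid m R)
    {A : Matrix (m ⊕ Unit) (m ⊕ Unit) R} (hA : A.det = 1) :
    A ∈ elementaryMonoid (m ⊕ Unit) R := by
  rcases isEmpty_or_nonempty m with _ | _
  · have : Subsingleton (m ⊕ Unit) := (Equiv.emptySum m Unit).subsingleton
    exact elementaryMonoid.mem_of_det_eq_one_of_subsingleton hA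
  · obtain ⟨g, hg, hcol⟩ :=
      hR.elementaryEquiv_elim_zero_one (isUnimodular_col_of_det_eq_one hA (Sum.inr ()))
    have hdet : (g * A).det = 1 := by
      rw [det_mul, elementaryMonoid.det_eq_one hg, hA, one_mul]
    exact elementaryMonoid.mem_of_mul_mem hg (elementaryMonoid.mem_of_col_eq hm hdet hcol)

theorem mem_elementaryMonoid_of_det_eq_one (hR : HasStableRankOne R) {A : Matrix ι ι R}
    (hA : A.det = 1) : A ∈ elementaryMonoid ι R := by
  suffices hfin : ∀ (k : ℕ) {B : Matrix (Fin k) (Fin k) R}, B.det = 1 →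
      B ∈ elementaryMonoid (Fin k) R by
    rw [← elementaryMonoid.reindexAlgEquiv_mem_iff (Fintype.equivFin ι)]
    exact hfin _ (by rw [det_reindexAlgEquiv, hA])
  intro k B hB
  induction k with
  | zero => exact elementaryMonoid.mem_of_det_eq_one_of_subsingleton hB
  | succ k ih =>
    let e : Fin (k + 1) ≃ Fin k ⊕ Unit := Fintype.equivOfCardEq (by simp)
    rw [← elementaryMonoid.reindexAlgEquiv_mem_iff e]
    exact hR.mem_elementaryMonoid_sum_unit (fun _ ↦ ih) (by rw [det_reindexAlgEquiv, hB])

end HasStableRankOne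

end Elementary

/-- A commutative ring of stable rank 1 is a generalized Euclidean ring. -/
theorem stmt_2 (R : Type*) [CommRing R]
    (hsr : ∀ a b : R, Ideal.span ({a, b} : Set R) = ⊤ → ∃ t : R, IsUnit (a + b * t)) :
    IsGERing R := by
  intro n _ A hA
  have hmem : A ∈ elementaryMonoid (Fin n) R :=
    HasStableRankOne.mem_elementaryMonoid_of_det_eq_one hsr hA
  rwa [elementaryMonoid, range_toMatrix_eq_elemMatrices] at hmem
end

section
/- Let R be a commutative ring with identity of stable rank at most 2, i.e., whenever a, b, c ∈ R satisfy aR + bR + cR = R there exist x, y ∈ R with (a + cx)R + (b + cy)R = R. Then R is a generalized Euclidean ring (SL_n(R) = E_n(R) for all n ≥ 2) if and only if R is a GE_2-ring (SL_2(R) = E_2(R)). -/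
open Matrix MulAction

/-- The elementary group `E_ι(R)`, for an arbitrary finite index type `ι`. It is encoded as a
submonoid of the matrix ring; closure under inverses is `exists_mul_eq_one_of_mem_elementary`. -/
def elementary (ι R : Type*) [Fintype ι] [DecidableEq ι] [CommRing R] :
    Submonoid (Matrix ι ι R) :=
  Submonoid.closure (Set.range TransvectionStruct.toMatrix)

lemma elementary_fin (n : ℕ) (R : Type*) [CommRing R] :
    elementary (Fin n) R = Submonoid.closure (ElemMatrices n R) := by
  have range_eq : Set.range TransvectionStruct.toMatrix = ElemMatrices n R := by
    ext M
    exact ⟨fun ⟨t, ht⟩ => ⟨t.i, t.j, t.c, t.hij, ht.symm⟩,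
      fun ⟨i, j, c, hij, hM⟩ => ⟨⟨i, j, hij, c⟩, hM.symm⟩⟩
  rw [elementary, range_eq]

section Elementary

variable {ι κ R : Type*} [Fintype ι] [DecidableEq ι] [Fintype κ] [DecidableEq κ] [CommRing R]

lemma mem_elementary_iff {M : Matrix ι ι R} :
    M ∈ elementary ι R ↔
      ∃ L : List (TransvectionStruct ι R), (L.map TransvectionStruct.toMatrix).prod = M := by
  rw [elementary, ← FreeMonoid.mrange_lift, MonoidHom.mem_mrange]
  simp only [FreeMonoid.lift_apply]
  exact FreeMonoid.toList.exists_congr_left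

lemma transvection_mem_elementary {i j : ι} (hij : i ≠ j) (c : R) :
    transvection i j c ∈ elementary ι R :=
  Submonoid.subset_closure ⟨⟨i, j, hij, c⟩, rfl⟩

lemma det_of_mem_elementary {M : Matrix ι ι R} (hM : M ∈ elementary ι R) : M.det = 1 := by
  obtain ⟨L, rfl⟩ := mem_elementary_iff.1 hM
  exact TransvectionStruct.det_toMatrix_prod L

lemma exists_mul_eq_one_of_mem_elementary {M : Matrix ι ι R} (hM : M ∈ elementary ι R) :
    ∃ N ∈ elementary ι R, N * M = 1 := by
  obtain ⟨L, rfl⟩ := mem_elementary_iff.1 hM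
  exact ⟨_, mem_elementary_iff.2 ⟨L.reverse.map TransvectionStruct.inv, by rw [List.map_map]⟩,
    TransvectionStruct.reverse_inv_prod_mul_prod L⟩

lemma reindex_mem_elementary (e : ι ≃ κ) {M : Matrix ι ι R} (hM : M ∈ elementary ι R) :
    reindex e e M ∈ elementary κ R := by
  obtain ⟨L, rfl⟩ := mem_elementary_iff.1 hM
  refine mem_elementary_iff.2 ⟨L.map (TransvectionStruct.reindexEquiv e), ?_⟩
  rw [List.map_map, TransvectionStruct.toMatrix_reindexEquiv_prod, coe_reindexAlgEquiv]

lemma fromBlocks_one_mem_elementary {M : Matrix ι ι R} (hM : M ∈ elementary ι R) :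
    fromBlocks M 0 0 (1 : Matrix κ κ R) ∈ elementary (ι ⊕ κ) R := by
  obtain ⟨L, rfl⟩ := mem_elementary_iff.1 hM
  refine mem_elementary_iff.2 ⟨L.map (TransvectionStruct.sumInl κ), ?_⟩
  simpa [fromBlocks_one] using TransvectionStruct.sumInl_toMatrix_prod_mul κ (1 : Matrix ι ι R) L 1

lemma fromBlocks_one_lower_mem_elementary (C : Matrix κ ι R) :
    fromBlocks 1 0 C 1 ∈ elementary (ι ⊕ κ) R := by
  induction C using Matrix.induction_on' with
  | h_zero => simpa only [fromBlocks_one] using one_mem (elementary (ι ⊕ κ) R)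
  | h_add C D hC hD =>
    simpa [fromBlocks_multiply] using mul_mem hC hD
  | h_std_basis i j c =>
    have eq_transvection : fromBlocks 1 0 (single i j c) 1 =
        transvection (Sum.inr i : ι ⊕ κ) (Sum.inl j) c := by
      ext (k | k) (l | l) <;> simp [transvection, single_apply, one_apply]
    exact eq_transvection ▸ transvection_mem_elementary Sum.inr_ne_inl c

lemma fromBlocks_mem_elementary_of_det_eq_one
    (hSL : ∀ B : Matrix ι ι R, B.det = 1 → B ∈ elementary ι R)
    {B : Matrix ι ι R} {C : Matrix κ ι R} (hdet : (fromBlocks B 0 C 1).det = 1) :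
    fromBlocks B 0 C 1 ∈ elementary (ι ⊕ κ) R := by
  have hB : B ∈ elementary ι R := hSL B (by simpa [det_fromBlocks_zero₁₂] using hdet)
  simpa [fromBlocks_multiply] using
    mul_mem (fromBlocks_one_mem_elementary (κ := κ) hB) (fromBlocks_one_lower_mem_elementary C)

lemma mem_elementary_of_single_mem_orbit_col
    (hSL : ∀ B : Matrix ι ι R, B.det = 1 → B ∈ elementary ι R)
    {A : Matrix (ι ⊕ Unit) (ι ⊕ Unit) R} (hA : A.det = 1)
    (hcol : Pi.single (Sum.inr ()) 1 ∈ orbit (elementary (ι ⊕ Unit) R) (A.col (Sum.inr ()))) :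
    A ∈ elementary (ι ⊕ Unit) R := by
  obtain ⟨⟨M, hM⟩, hMA⟩ := hcol
  replace hMA : (M * A).col (Sum.inr ()) = Pi.single (Sum.inr ()) 1 := hMA
  have hblocks : M * A = fromBlocks (M * A).toBlocks₁₁ 0 (M * A).toBlocks₂₁ 1 := by
    conv_lhs => rw [← fromBlocks_toBlocks (M * A)]
    congr 1
    · ext i j
      exact (congr_fun hMA (Sum.inl i)).trans (by simp)
    · ext i j
      exact (congr_fun hMA (Sum.inr i)).trans (by simp)
  have hdet : (M * A).det = 1 := by rw [det_mul, det_of_mem_elementary hM, hA, one_mul]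
  obtain ⟨N, hN, hNM⟩ := exists_mul_eq_one_of_mem_elementary hM
  rw [← one_mul A, ← hNM, mul_assoc]
  rw [hblocks] at hdet ⊢
  exact mul_mem hN (fromBlocks_mem_elementary_of_det_eq_one hSL hdet)

end Elementary

section Orbit

lemma mem_orbit_trans {M α : Type*} [Monoid M] [MulAction M α] {u v w : α}
    (hw : w ∈ orbit M v) (hv : v ∈ orbit M u) : w ∈ orbit M u := by
  obtain ⟨m, rfl⟩ := hv
  exact orbit_smul_subset m u hw

variable {ι R : Type*} [Fintype ι] [DecidableEq ι] [CommRing R]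

lemma transvection_mulVec (i j : ι) (c : R) (v : ι → R) :
    transvection i j c *ᵥ v = v + Pi.single i (c * v j) := by
  simp [transvection, add_mulVec, single_mulVec, Pi.single]

lemma add_single_mem_orbit {v : ι → R} {i : ι} {a : R} (ha : a ∈ Ideal.span (v '' {i}ᶜ)) :
    v + Pi.single i a ∈ orbit (elementary ι R) v := by
  -- An arbitrary coefficient `c` is needed in the scalar multiplication step, and an arbitrary
  -- starting column `u` in the addition step, where the `i`-th entry has already been changed.
  suffices ∀ (c : R) (u : ι → R), (∀ j ≠ i, u j = v j) →
      u + Pi.single i (c * a) ∈ orbit (elementary ι R) u by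
    simpa using this 1 v fun _ _ => rfl
  induction ha using Submodule.span_induction with
  | mem _ hx =>
    obtain ⟨j, hj, rfl⟩ := hx
    intro c u hu
    rw [← hu j hj, ← transvection_mulVec]
    exact mem_orbit u (⟨_, transvection_mem_elementary (Ne.symm hj) c⟩ : elementary ι R)
  | zero => simp
  | add a b _ _ iha ihb =>
    intro c u hu
    rw [mul_add, Pi.single_add, ← add_assoc]
    exact mem_orbit_trans (ihb c _ fun j hj => by simp [hj, hu j hj]) (iha c u hu)
  | smul r a _ iha =>
    intro c u hu
    rw [smul_eq_mul, ← mul_assoc]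
    exact iha (c * r) u hu

lemma add_mem_orbit_of_isUnit_apply {v u : ι → R} {i : ι} (hv : IsUnit (v i)) (hu : u i = 0) :
    v + u ∈ orbit (elementary ι R) v := by
  suffices ∀ s : Finset ι, v + ∑ j ∈ s, Pi.single j (u j) ∈ orbit (elementary ι R) v by
    simpa only [Finset.univ_sum_single] using this Finset.univ
  intro s
  induction s using Finset.induction_on with
  | empty => simp
  | insert j s hj ih =>
    rw [Finset.sum_insert hj, add_comm (Pi.single _ _), ← add_assoc]
    refine mem_orbit_trans ?_ ih
    obtain rfl | hij := eq_or_ne i j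
    · simp [hu]
    set w := v + ∑ k ∈ s, Pi.single k (u k) with w_def
    have hw : w i = v i := by simp [w_def, hu, Finset.sum_apply, Pi.single_apply]
    have span_eq_top : Ideal.span (w '' {j}ᶜ) = ⊤ :=
      Ideal.eq_top_of_isUnit_mem _ (Ideal.subset_span ⟨i, hij, hw⟩) hv
    exact add_single_mem_orbit (span_eq_top ▸ Submodule.mem_top)

lemma single_mem_orbit_of_isCoprime {v : ι → R} {i p q : ι} (hp : p ≠ i) (hq : q ≠ i)
    (hpq : IsCoprime (v p) (v q)) : Pi.single i 1 ∈ orbit (elementary ι R) v := by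
  have span_eq_top : Ideal.span (v '' {i}ᶜ) = ⊤ := by
    obtain ⟨s, t, hst⟩ := hpq
    rw [Ideal.eq_top_iff_one, ← hst]
    exact add_mem (Ideal.mul_mem_left _ s (Ideal.subset_span ⟨p, hp, rfl⟩))
      (Ideal.mul_mem_left _ t (Ideal.subset_span ⟨q, hq, rfl⟩))
  have hpivot : v + Pi.single i (1 - v i) ∈ orbit (elementary ι R) v :=
    add_single_mem_orbit (span_eq_top ▸ Submodule.mem_top)
  set w := v + Pi.single i (1 - v i) with w_def
  have hw : w i = 1 := by simp [w_def]
  have hclear : w + (Pi.single i 1 - w) ∈ orbit (elementary ι R) w :=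
    add_mem_orbit_of_isUnit_apply (hw ▸ isUnit_one) (by simp [hw])
  rw [add_sub_cancel] at hclear
  exact mem_orbit_trans hclear hpivot

end Orbit

section StableRank

/-- The ring `R` has stable rank at most `2`: a unimodular triple can be shortened to a unimodular
pair by adding multiples of its last entry to the other two. -/
def StableRankLETwo (R : Type*) [CommRing R] : Prop :=
  ∀ a b c : R, Ideal.span ({a, b, c} : Set R) = ⊤ →
    ∃ x y : R, Ideal.span ({a + c * x, b + c * y} : Set R) = ⊤

lemma exists_mem_span_compl_pair {ι R : Type*} [CommRing R] {v : ι → R}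
    (hv : Ideal.span (Set.range v) = ⊤) (p q : ι) :
    ∃ c ∈ Ideal.span (v '' {p, q}ᶜ), Ideal.span {v p, v q, c} = ⊤ := by
  have range_eq : Set.range v = insert (v p) (insert (v q) (v '' {p, q}ᶜ)) := by
    rw [← Set.image_insert_eq, ← Set.image_insert_eq, ← Set.image_univ]
    congr 1
    grind
  have one_mem : (1 : R) ∈ Ideal.span (Set.range v) := hv ▸ Submodule.mem_top
  rw [range_eq, Ideal.mem_span_insert] at one_mem
  obtain ⟨a, z, hz, h_one⟩ := one_mem
  obtain ⟨b, c, hc, rfl⟩ := Ideal.mem_span_insert.1 hz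
  refine ⟨c, hc, (Ideal.eq_top_iff_one _).2 ?_⟩
  rw [h_one, Ideal.mem_span_insert]
  exact ⟨a, _, Ideal.mem_span_pair.2 ⟨b, 1, by rw [one_mul]⟩, rfl⟩

variable {ι R : Type*} [Fintype ι] [DecidableEq ι] [CommRing R]

lemma StableRankLETwo.exists_mem_orbit_isCoprime (hR : StableRankLETwo R) {v : ι → R}
    (hv : Ideal.span (Set.range v) = ⊤) {p q : ι} (hpq : p ≠ q) :
    ∃ w ∈ orbit (elementary ι R) v, IsCoprime (w p) (w q) := by
  obtain ⟨c, hc, hspan⟩ := exists_mem_span_compl_pair hv p q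
  obtain ⟨x, y, hxy⟩ := hR _ _ _ hspan
  set u := v + Pi.single p (c * x) with u_def
  have hu : u ∈ orbit (elementary ι R) v := by
    have compl_subset : ({p, q} : Set ι)ᶜ ⊆ {p}ᶜ := by grind
    exact add_single_mem_orbit
      (Ideal.mul_mem_right x _ (Ideal.span_mono (Set.image_mono compl_subset) hc))
  have hw : u + Pi.single q (c * y) ∈ orbit (elementary ι R) u := by
    have image_subset : v '' {p, q}ᶜ ⊆ u '' {q}ᶜ := by
      rintro _ ⟨j, hj, rfl⟩
      exact ⟨j, by grind, by simp [u_def, show j ≠ p by grind]⟩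
    exact add_single_mem_orbit (Ideal.mul_mem_right y _ (Ideal.span_mono image_subset hc))
  refine ⟨_, mem_orbit_trans hw hu, ?_⟩
  rw [Ideal.eq_top_iff_one, Ideal.mem_span_pair] at hxy
  simpa [IsCoprime, u_def, hpq, hpq.symm] using hxy

lemma StableRankLETwo.single_mem_orbit (hR : StableRankLETwo R) {v : ι → R}
    (hv : Ideal.span (Set.range v) = ⊤) (hι : 2 < Fintype.card ι) (i : ι) :
    Pi.single i 1 ∈ orbit (elementary ι R) v := by
  obtain ⟨p, hp, q, hq, hpq⟩ : ∃ p ∈ Finset.univ.erase i, ∃ q ∈ Finset.univ.erase i, p ≠ q := by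
    rw [← Finset.one_lt_card, Finset.card_erase_of_mem (Finset.mem_univ i), Finset.card_univ]
    lia
  obtain ⟨w, hw, hcop⟩ := hR.exists_mem_orbit_isCoprime hv hpq
  exact mem_orbit_trans
    (single_mem_orbit_of_isCoprime (Finset.ne_of_mem_erase hp) (Finset.ne_of_mem_erase hq) hcop) hw

lemma span_range_col_eq_top {A : Matrix ι ι R} (hA : IsUnit A.det) (j : ι) :
    Ideal.span (Set.range (A.col j)) = ⊤ := by
  have expansion : ∑ i, A.adjugate j i * A i j = A.det := by
    simpa [mul_apply] using congr_fun₂ (adjugate_mul A) j j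
  refine Ideal.eq_top_of_isUnit_mem _ ?_ (expansion ▸ hA)
  exact sum_mem fun i _ => Ideal.mul_mem_left _ _ (Ideal.subset_span ⟨i, rfl⟩)

lemma StableRankLETwo.isGE_succ (hR : StableRankLETwo R) {n : ℕ} (hn : 2 ≤ n) (hGE : IsGE R n) :
    IsGE R (n + 1) := by
  intro A hA
  let e : Fin (n + 1) ≃ Fin n ⊕ Unit := finSuccEquivLast.trans (Equiv.optionEquivSumPUnit _)
  have hdet : (reindex e e A).det = 1 := by rw [det_reindex_self, hA]
  have hcol := hR.single_mem_orbit (span_range_col_eq_top (hdet ▸ isUnit_one) (Sum.inr ()))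
    (by simpa [Nat.lt_succ_iff] using hn) (Sum.inr ())
  have hmem : reindex e e A ∈ elementary (Fin n ⊕ Unit) R :=
    mem_elementary_of_single_mem_orbit_col (elementary_fin n R ▸ hGE) hdet hcol
  rw [← elementary_fin]
  simpa using reindex_mem_elementary e.symm hmem

end StableRank

/-- A commutative ring of stable rank at most 2 is a generalized Euclidean ring
if and only if it is a `GE_2`-ring. -/
theorem stmt_3 (R : Type*) [CommRing R]
    (hsr : ∀ a b c : R, Ideal.span ({a, b, c} : Set R) = ⊤ →
      ∃ x y : R, Ideal.span ({a + c * x, b + c * y} : Set R) = ⊤) :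
    IsGERing R ↔ IsGE R 2 := by
  refine ⟨fun h => h 2 le_rfl, fun h n hn => ?_⟩
  induction n, hn using Nat.le_induction with
  | base => exact h
  | succ n hn ih => exact StableRankLETwo.isGE_succ hsr hn ih
end

section
/- Let R be a commutative ring with identity. Then R is a GE_2-ring, i.e., SL_2(R) = E_2(R), if and only if the group E_2(R) acts transitively (by right multiplication on row vectors) on the set Um_2(R) = {(r, s) ∈ R² : rR + sR = R} of unimodular pairs of R. -/
/-!
A pair `(r, s)` with `u r + v s = 1` is the first row of `!![r, s; -v, u]`, so `SL_2(R)` is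
transitive on unimodular pairs, and so is `E_2(R)` when the two groups agree. Conversely, the first
row of any `A` in `SL_2(R)` is unimodular, hence of the form `(1, 0) M`, the first row of some `M`
in `E_2(R)`. Then `A M⁻¹` has first row `(1, 0)` and determinant one, so it is elementary.
-/

theorem span_pair_eq_top_iff_isCoprime {R : Type*} [CommSemiring R] {r s : R} :
    Ideal.span {r, s} = ⊤ ↔ IsCoprime r s := by
  rw [Ideal.eq_top_iff_one, Ideal.mem_span_pair, IsCoprime]

section

open Matrix MatrixGroups

variable {R : Type*} [CommRing R]

theorem det_eq_one_of_mem_closure_elemMatrices {n : ℕ} {M : Matrix (Fin n) (Fin n) R}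
    (hM : M ∈ Submonoid.closure (ElemMatrices n R)) : M.det = 1 := by
  suffices Submonoid.closure (ElemMatrices n R) ≤
      MonoidHom.mker (detMonoidHom : Matrix (Fin n) (Fin n) R →* R) from this hM
  rw [Submonoid.closure_le]
  rintro _ ⟨i, j, c, hij, rfl⟩
  exact det_transvection_of_ne i j hij c

theorem row_vecMul_inv_mul {n : Type*} [Fintype n] [DecidableEq n]
    (A B : SpecialLinearGroup n R) (i : n) :
    A i ᵥ* ↑(A⁻¹ * B) = B i := calc
  A i ᵥ* ↑(A⁻¹ * B) = (A * (A⁻¹ * B)) i := rfl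
  _ = B i := by rw [mul_inv_cancel_left]

theorem exists_SL2_row_zero_eq {r s : R} (h : IsCoprime r s) :
    ∃ A : SL(2, R), A 0 = ![r, s] := by
  obtain ⟨A, rfl, rfl⟩ := h.exists_SL2_row 0
  exact ⟨A, (FinVec.etaExpand_eq (A 0)).symm⟩

theorem IsGE.exists_vecMul_eq (hR : IsGE R 2) {r s r' s' : R} (h : IsCoprime r s)
    (h' : IsCoprime r' s') :
    ∃ M ∈ Submonoid.closure (ElemMatrices 2 R), ![r, s] ᵥ* M = ![r', s'] := by
  obtain ⟨A, hA⟩ := exists_SL2_row_zero_eq h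
  obtain ⟨B, hB⟩ := exists_SL2_row_zero_eq h'
  rw [← hA, ← hB]
  exact ⟨↑(A⁻¹ * B), hR _ (A⁻¹ * B).det_coe, row_vecMul_inv_mul A B 0⟩

theorem eq_transvection_of_row_zero_eq_one {N : Matrix (Fin 2) (Fin 2) R} (hdet : N.det = 1)
    (hrow : N 0 = (1 : Matrix (Fin 2) (Fin 2) R) 0) : N = transvection 1 0 (N 1 0) := by
  have h00 : N 0 0 = 1 := congrFun hrow 0
  have h01 : N 0 1 = 0 := congrFun hrow 1
  have h11 : N 1 1 = 1 := by simpa [det_fin_two, h00, h01] using hdet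
  ext i j
  fin_cases i <;> fin_cases j <;> simp [transvection, h00, h01, h11]

theorem exists_eq_transvection_mul_of_row_zero_eq {A M : Matrix (Fin 2) (Fin 2) R}
    (hM : IsUnit M.det) (hdet : A.det = M.det) (hrow : A 0 = M 0) :
    ∃ c : R, A = transvection 1 0 c * M := by
  have hdet_mul_inv : (A * M⁻¹).det = 1 := by
    rw [det_mul, hdet, ← det_mul, mul_nonsing_inv M hM, det_one]
  have hrow_mul_inv : (A * M⁻¹) 0 = (1 : Matrix (Fin 2) (Fin 2) R) 0 := by
    rw [mul_apply_eq_vecMul, hrow, ← mul_apply_eq_vecMul, mul_nonsing_inv M hM]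
  refine ⟨(A * M⁻¹) 1 0, ?_⟩
  rw [← eq_transvection_of_row_zero_eq_one hdet_mul_inv hrow_mul_inv,
    nonsing_inv_mul_cancel_right M A hM]

theorem isGE_two_of_forall_isCoprime
    (h : ∀ r s : R, IsCoprime r s →
      ∃ M ∈ Submonoid.closure (ElemMatrices 2 R), ![1, 0] ᵥ* M = ![r, s]) :
    IsGE R 2 := by
  intro A hA
  obtain ⟨M, hM, hMA⟩ := h (A 0 0) (A 0 1) (SpecialLinearGroup.isCoprime_row ⟨A, hA⟩ 0)
  have hrow : A 0 = M 0 := calc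
    A 0 = ![A 0 0, A 0 1] := (FinVec.etaExpand_eq (A 0)).symm
    _ = ![1, 0] ᵥ* M := hMA.symm
    _ = M 0 := by ext j; simp [vecMul, vecHead]
  have hM_det : M.det = 1 := det_eq_one_of_mem_closure_elemMatrices hM
  obtain ⟨c, rfl⟩ := exists_eq_transvection_mul_of_row_zero_eq
    (hM_det ▸ isUnit_one) (hA.trans hM_det.symm) hrow
  exact mul_mem (Submonoid.subset_closure ⟨1, 0, c, one_ne_zero, rfl⟩) hM

end

/-- `R` is a `GE_2`-ring if and only if `E_2(R)` acts transitively (by right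
multiplication on row vectors) on the set of unimodular pairs of `R`. -/
theorem stmt_4 (R : Type*) [CommRing R] :
    IsGE R 2 ↔
      ∀ r s r' s' : R, Ideal.span ({r, s} : Set R) = ⊤ →
        Ideal.span ({r', s'} : Set R) = ⊤ →
        ∃ M ∈ Submonoid.closure (ElemMatrices 2 R),
          Matrix.vecMul ![r, s] M = ![r', s'] := by
  simp only [span_pair_eq_top_iff_isCoprime]
  exact ⟨fun hR _ _ _ _ h h' ↦ hR.exists_vecMul_eq h h',
    fun h ↦ isGE_two_of_forall_isCoprime fun r s ↦ h 1 0 r s isCoprime_one_left⟩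
end

section
/- Let R be a commutative ring with identity and let J be an ideal of R contained in the Jacobson radical of R. Then R is a generalized Euclidean ring if and only if R/J is a generalized Euclidean ring. -/
open Matrix

section ElementarySubgroup

variable (ι R : Type*) [Fintype ι] [DecidableEq ι] [CommRing R]

/-- The elementary group `E_ι(R)`, as a subgroup of the special linear group over an arbitrary
finite index type. -/
def elementarySubgroup : Subgroup (SpecialLinearGroup ι R) :=
  Subgroup.closure (Set.range TransvectionStruct.toSpecialLinearGroup)

variable {ι R}

lemma transvection_mem_elementarySubgroup {i j : ι} (hij : i ≠ j) (c : R) :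
    SpecialLinearGroup.transvection hij c ∈ elementarySubgroup ι R :=
  Subgroup.subset_closure ⟨⟨i, j, hij, c⟩, rfl⟩

variable (ι R) in
lemma elementarySubgroup_toSubmonoid :
    (elementarySubgroup ι R).toSubmonoid =
      Submonoid.closure (Set.range TransvectionStruct.toSpecialLinearGroup) := by
  rw [elementarySubgroup, Subgroup.closure_toSubmonoid, Set.union_eq_self_of_subset_right]
  rintro _ ⟨⟨i, j, hij, c⟩, h⟩
  refine ⟨⟨i, j, hij, -c⟩, ?_⟩
  rw [TransvectionStruct.toSpecialLinearGroup_mk, ← SpecialLinearGroup.transvection_inv,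
    ← TransvectionStruct.toSpecialLinearGroup_mk, h, inv_inv]

variable (ι R) in
/-- The matrices lying in the elementary group, as a submonoid of the matrix ring. -/
def elementarySubmonoid : Submonoid (Matrix ι ι R) :=
  (elementarySubgroup ι R).toSubmonoid.map SpecialLinearGroup.coeMonoidHom

lemma coe_mem_elementarySubmonoid {A : SpecialLinearGroup ι R} :
    (A : Matrix ι ι R) ∈ elementarySubmonoid ι R ↔ A ∈ elementarySubgroup ι R :=
  Submonoid.mem_map_iff_mem (f := SpecialLinearGroup.coeMonoidHom)
    SpecialLinearGroup.coeMonoidHom_injective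

lemma closure_elemMatrices (n : ℕ) :
    Submonoid.closure (ElemMatrices n R) = elementarySubmonoid (Fin n) R := by
  rw [elementarySubmonoid, elementarySubgroup_toSubmonoid, MonoidHom.map_mclosure,
    ← Set.range_comp]
  congr 1
  ext M
  constructor
  · rintro ⟨i, j, c, hij, rfl⟩
    exact ⟨⟨i, j, hij, c⟩, rfl⟩
  · rintro ⟨⟨i, j, hij, c⟩, rfl⟩
    exact ⟨i, j, c, hij, rfl⟩

lemma isGE_iff_elementarySubgroup_eq_top {n : ℕ} :
    IsGE R n ↔ elementarySubgroup (Fin n) R = ⊤ := by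
  simp only [IsGE, closure_elemMatrices, Subgroup.eq_top_iff']
  exact ⟨fun h A => coe_mem_elementarySubmonoid.1 (h A A.det_coe),
    fun h A hA => coe_mem_elementarySubmonoid.2 (h ⟨A, hA⟩)⟩

variable {S : Type*} [CommRing S] {f : R →+* S}

lemma specialLinearGroup_map_transvection (f : R →+* S) {i j : ι} (hij : i ≠ j) (c : R) :
    SpecialLinearGroup.map f (SpecialLinearGroup.transvection hij c) =
      SpecialLinearGroup.transvection hij (f c) := by
  ext k l
  simp [SpecialLinearGroup.transvection_coe, one_apply, single_apply, apply_ite f]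

lemma map_elementarySubgroup (hf : Function.Surjective f) :
    (elementarySubgroup ι R).map (SpecialLinearGroup.map f) = elementarySubgroup ι S := by
  rw [elementarySubgroup, MonoidHom.map_closure, ← Set.range_comp, elementarySubgroup]
  congr 1
  ext A
  constructor
  · rintro ⟨⟨i, j, hij, c⟩, rfl⟩
    exact ⟨⟨i, j, hij, f c⟩, (specialLinearGroup_map_transvection f hij c).symm⟩
  · rintro ⟨⟨i, j, hij, c⟩, rfl⟩
    obtain ⟨c, rfl⟩ := hf c
    exact ⟨⟨i, j, hij, c⟩, specialLinearGroup_map_transvection f hij c⟩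

end ElementarySubgroup

section Diagonal

variable {ι R : Type*} [Fintype ι] [DecidableEq ι] [CommRing R]

/-- Diagonal matrices with unit entries, as a monoid homomorphism. -/
def unitsDiagonalHom (ι R : Type*) [Fintype ι] [DecidableEq ι] [CommRing R] :
    (ι → Rˣ) →* Matrix ι ι R :=
  (diagonalRingHom ι R : (ι → R) →* Matrix ι ι R).comp ((Units.coeHom R).compLeft ι)

lemma unitsDiagonalHom_apply (d : ι → Rˣ) :
    unitsDiagonalHom ι R d = diagonal fun i => (d i : R) := rfl

/-- Whitehead's identity `h(u) = w(u) w(-1)`, where `w(u) = e_ij(u) e_ji(-u⁻¹) e_ij(u)`. -/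
lemma unitsDiagonalHom_mulSingle_mul_mulSingle_inv {i j : ι} (hij : i ≠ j) (u : Rˣ) :
    unitsDiagonalHom ι R (Pi.mulSingle i u * Pi.mulSingle j u⁻¹) =
      transvection i j (u : R) * transvection j i (-(↑u⁻¹ : R)) * transvection i j (u : R) *
        (transvection i j (-1) * transvection j i 1 * transvection i j (-1)) := by
  simp only [transvection, mul_add, add_mul, mul_one, one_mul, single_mul_single_same,
    single_mul_single_of_ne _ _ _ _ hij, single_mul_single_of_ne _ _ _ _ hij.symm, add_zero,
    mul_neg, neg_mul, Units.mul_inv, Units.inv_mul, neg_neg]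
  ext a b
  simp only [unitsDiagonalHom_apply, diagonal_apply, Matrix.add_apply, one_apply, single_apply,
    Pi.mul_apply, Pi.mulSingle_apply, Units.val_mul]
  by_cases hai : a = i <;> by_cases haj : a = j <;> by_cases hbi : b = i <;>
    by_cases hbj : b = j <;> subst_vars <;> simp_all [eq_comm]

lemma unitsDiagonalHom_mulSingle_mul_mulSingle_inv_mem (i j : ι) (u : Rˣ) :
    unitsDiagonalHom ι R (Pi.mulSingle i u * Pi.mulSingle j u⁻¹) ∈ elementarySubmonoid ι R := by
  obtain rfl | hij := eq_or_ne i j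
  · rw [← Pi.mulSingle_mul, mul_inv_cancel, Pi.mulSingle_one, map_one]
    exact one_mem _
  have mem {k l : ι} (hkl : k ≠ l) (c : R) : transvection k l c ∈ elementarySubmonoid ι R :=
    coe_mem_elementarySubmonoid.2 (transvection_mem_elementarySubgroup hkl c)
  rw [unitsDiagonalHom_mulSingle_mul_mulSingle_inv hij]
  exact mul_mem (mul_mem (mul_mem (mem hij _) (mem hij.symm _)) (mem hij _))
    (mul_mem (mul_mem (mem hij _) (mem hij.symm _)) (mem hij _))

lemma prod_mulSingle_mul_mulSingle_inv {G : Type*} [CommGroup G] (j : ι) {d : ι → G}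
    (hd : ∏ i, d i = 1) :
    ∏ i, (Pi.mulSingle i (d i) * Pi.mulSingle j (d i)⁻¹ : ι → G) = d := by
  have hj : ∏ i, (Pi.mulSingle j (d i)⁻¹ : ι → G) = 1 := by
    simpa [hd] using
      (map_prod (MonoidHom.mulSingle (fun _ : ι => G) j) (fun i => (d i)⁻¹) Finset.univ).symm
  rw [Finset.prod_mul_distrib, Finset.univ_prod_mulSingle, hj, mul_one]

lemma unitsDiagonalHom_mem {d : ι → Rˣ} (hd : ∏ i, d i = 1) :
    unitsDiagonalHom ι R d ∈ elementarySubmonoid ι R := by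
  cases isEmpty_or_nonempty ι with
  | inl _ => exact ⟨1, one_mem _, Subsingleton.elim _ _⟩
  | inr h =>
    obtain ⟨j⟩ := h
    suffices d ∈ (elementarySubmonoid ι R).comap (unitsDiagonalHom ι R) from this
    rw [← prod_mulSingle_mul_mulSingle_inv j hd]
    exact prod_mem fun i _ => unitsDiagonalHom_mulSingle_mul_mulSingle_inv_mem i j (d i)

lemma mem_elementarySubgroup_of_isDiag {A : SpecialLinearGroup ι R}
    (hA : (A : Matrix ι ι R).IsDiag) : A ∈ elementarySubgroup ι R := by
  have hdet : ∏ i, A i i = 1 := by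
    have h := A.det_coe
    rwa [← hA.diagonal_diag, det_diagonal] at h
  have hunit (i : ι) : IsUnit (A i i) :=
    isUnit_of_dvd_one <|
      (Finset.dvd_prod_of_mem (fun k => A k k) (Finset.mem_univ i)).trans hdet.dvd
  choose d hd using hunit
  have hAd : unitsDiagonalHom ι R d = A := by
    simp only [unitsDiagonalHom_apply, hd]
    exact hA.diagonal_diag
  have hprod : ∏ i, d i = 1 := Units.ext (by simpa [hd] using hdet)
  rw [← coe_mem_elementarySubmonoid, ← hAd]
  exact unitsDiagonalHom_mem hprod

end Diagonal

section ColumnTransvection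

variable {ι R : Type*} [Fintype ι] [DecidableEq ι] [CommRing R]

/-- The identity matrix with the vector `v` added to column `c`, where `v c = 0`. Multiplying by it
on the left adds `v i` times row `c` to every row `i`, so it clears a whole column at once. -/
def columnTransvection (c : ι) (v : ι → R) (hv : v c = 0) : SpecialLinearGroup ι R :=
  ⟨1 + vecMulVec v (Pi.single c 1), by
    rw [vecMulVec_eq Unit, det_one_add_replicateCol_mul_replicateRow, single_one_dotProduct, hv,
      add_zero]⟩

lemma columnTransvection_coe {c : ι} {v : ι → R} (hv : v c = 0) :
    (columnTransvection c v hv : Matrix ι ι R) = 1 + vecMulVec v (Pi.single c 1) := rfl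

lemma columnTransvection_mul_apply {c : ι} {v : ι → R} (hv : v c = 0)
    (A : SpecialLinearGroup ι R) (i j : ι) :
    (columnTransvection c v hv * A) i j = A i j + v i * A c j := by
  simp [columnTransvection_coe, add_mul, vecMulVec_mul, vecMulVec_apply]

lemma columnTransvection_zero (c : ι) : columnTransvection c (0 : ι → R) rfl = 1 :=
  Subtype.ext (by simp [columnTransvection])

lemma columnTransvection_add {c : ι} {v w : ι → R} (hv : v c = 0) (hw : w c = 0)
    (hvw : (v + w) c = 0) : columnTransvection c (v + w) hvw =
      columnTransvection c v hv * columnTransvection c w hw := by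
  ext i j
  rw [columnTransvection_mul_apply]
  simp only [columnTransvection_coe, Matrix.add_apply, vecMulVec_apply, Pi.add_apply, hw,
    one_apply, Pi.single_apply, eq_comm (a := c)]
  ring

lemma columnTransvection_single {c i : ι} (hic : i ≠ c) (a : R)
    (hv : (Pi.single i a : ι → R) c = 0) :
    columnTransvection c (Pi.single i a) hv = SpecialLinearGroup.transvection hic a := by
  ext k l
  simp [columnTransvection_coe, SpecialLinearGroup.transvection_coe, vecMulVec_apply, single_apply,
    Pi.single_apply, ← ite_and, and_comm, eq_comm]

lemma columnTransvection_mem_elementarySubgroup {c : ι} {v : ι → R} (hv : v c = 0) :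
    columnTransvection c v hv ∈ elementarySubgroup ι R := by
  let IsElementary (w : ι → R) : Prop :=
    ∃ hw : w c = 0, columnTransvection c w hw ∈ elementarySubgroup ι R
  suffices IsElementary (∑ i, Pi.single i (v i)) by
    rw [Finset.univ_sum_single] at this
    exact this.2
  refine Finset.sum_induction _ IsElementary ?_ ?_ fun i _ => ?_
  · rintro w x ⟨hw, hwmem⟩ ⟨hx, hxmem⟩
    refine ⟨by simp [hw, hx], ?_⟩
    rw [columnTransvection_add hw hx]
    exact mul_mem hwmem hxmem
  · refine ⟨rfl, ?_⟩
    rw [columnTransvection_zero]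
    exact one_mem _
  · obtain rfl | hic := eq_or_ne i c
    · simp only [hv, Pi.single_zero]
      refine ⟨rfl, ?_⟩
      rw [columnTransvection_zero]
      exact one_mem _
    · refine ⟨Pi.single_eq_of_ne' hic _, ?_⟩
      rw [columnTransvection_single hic]
      exact transvection_mem_elementarySubgroup hic _

end ColumnTransvection

section LocalHom

variable {ι R S : Type*} [Fintype ι] [DecidableEq ι] [CommRing R] [CommRing S] {f : R →+* S}

lemma mem_ker_specialLinearGroup_map {A : SpecialLinearGroup ι R} :
    A ∈ (SpecialLinearGroup.map f).ker ↔ ∀ i j, f (A i j) = (1 : Matrix ι ι S) i j :=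
  Subtype.ext_iff.trans Matrix.ext_iff.symm

lemma columnTransvection_mem_ker {c : ι} {v : ι → R} (hv : v c = 0) (hfv : ∀ i, f (v i) = 0) :
    columnTransvection c v hv ∈ (SpecialLinearGroup.map (n := ι) f).ker := by
  rw [mem_ker_specialLinearGroup_map]
  intro i j
  simp [columnTransvection, vecMulVec_apply, hfv, one_apply, apply_ite f]

variable [IsLocalHom f]

lemma isUnit_diag_of_mem_ker {A : SpecialLinearGroup ι R}
    (hA : A ∈ (SpecialLinearGroup.map f).ker) (i : ι) : IsUnit (A i i) := by
  refine isUnit_of_map_unit f _ ?_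
  rw [mem_ker_specialLinearGroup_map.1 hA, one_apply_eq]
  exact isUnit_one

lemma exists_columnTransvection_clears_column {A : SpecialLinearGroup ι R}
    (hA : A ∈ (SpecialLinearGroup.map f).ker) (c : ι) :
    ∃ (v : ι → R) (hv : v c = 0), columnTransvection c v hv ∈ (SpecialLinearGroup.map f).ker ∧
      ∀ i ≠ c, (columnTransvection c v hv * A) i c = 0 := by
  obtain ⟨u, hu⟩ := isUnit_diag_of_mem_ker hA c
  let v : ι → R := fun i => if i = c then 0 else -(A i c * ↑u⁻¹)
  have hv : v c = 0 := if_pos rfl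
  refine ⟨v, hv, columnTransvection_mem_ker hv fun i => ?_, fun i hic => ?_⟩
  · obtain rfl | hic := eq_or_ne i c
    · rw [hv, map_zero]
    · simp [v, hic, mem_ker_specialLinearGroup_map.1 hA]
  · rw [columnTransvection_mul_apply]
    simp [v, hic, mul_assoc, ← hu]

lemma exists_mem_elementarySubgroup_clears_columns {A : SpecialLinearGroup ι R}
    (hA : A ∈ (SpecialLinearGroup.map f).ker) (s : Finset ι) :
    ∃ E ∈ elementarySubgroup ι R ⊓ (SpecialLinearGroup.map f).ker,
      ∀ j ∈ s, ∀ i ≠ j, (E * A) i j = 0 := by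
  induction s using Finset.induction_on with
  | empty => exact ⟨1, one_mem _, by simp⟩
  | insert c s _ ih =>
    obtain ⟨E, hE, hs⟩ := ih
    obtain ⟨v, hv, hker, hc⟩ := exists_columnTransvection_clears_column (mul_mem hE.2 hA) c
    refine ⟨columnTransvection c v hv * E,
      mul_mem ⟨columnTransvection_mem_elementarySubgroup hv, hker⟩ hE, fun j hj i hij => ?_⟩
    rw [mul_assoc]
    obtain rfl | hjc := eq_or_ne j c
    · exact hc i hij
    · have hjs : j ∈ s := Finset.mem_of_mem_insert_of_ne hj hjc
      rw [columnTransvection_mul_apply, hs j hjs i hij, hs j hjs c hjc.symm, mul_zero, add_zero]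

lemma ker_specialLinearGroup_map_le_elementarySubgroup :
    (SpecialLinearGroup.map f).ker ≤ elementarySubgroup ι R := by
  intro A hA
  obtain ⟨E, hE, hEA⟩ := exists_mem_elementarySubgroup_clears_columns hA Finset.univ
  have hdiag : ((E * A : SpecialLinearGroup ι R) : Matrix ι ι R).IsDiag :=
    fun i j hij => hEA j (Finset.mem_univ j) i hij
  exact (Subgroup.mul_mem_cancel_left _ hE.1).1 (mem_elementarySubgroup_of_isDiag hdiag)

lemma specialLinearGroup_map_surjective (hf : Function.Surjective f) :
    Function.Surjective (SpecialLinearGroup.map (n := ι) f) := by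
  intro A
  cases isEmpty_or_nonempty ι with
  | inl _ => exact ⟨1, Subsingleton.elim _ _⟩
  | inr h =>
    obtain ⟨i⟩ := h
    obtain ⟨M, hM⟩ : ∃ M : Matrix ι ι R, M.map f = A :=
      ⟨(A : Matrix ι ι S).map (Function.surjInv hf), by ext; simp [Function.surjInv_eq]⟩
    have hdet : f M.det = 1 := by
      rw [f.map_det, RingHom.mapMatrix_apply, hM, A.det_coe]
    obtain ⟨u, hu⟩ := isUnit_of_map_unit f M.det (hdet ▸ isUnit_one)
    have hfu : f ↑u⁻¹ = 1 :=
      calc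
        f ↑u⁻¹ = f ↑u⁻¹ * f ↑u := by rw [hu, hdet, mul_one]
        _ = 1 := by rw [← map_mul, u.inv_mul, map_one]
    refine ⟨⟨M.updateRow i ((↑u⁻¹ : R) • M i), ?_⟩, Subtype.ext ?_⟩
    · rw [det_updateRow_smul, updateRow_eq_self, ← hu, u.inv_mul]
    · calc
        (M.updateRow i ((↑u⁻¹ : R) • M i)).map f
            = (M.map f).updateRow i (f ∘ ((↑u⁻¹ : R) • M i)) := map_updateRow f
        _ = (M.map f).updateRow i (M.map f i) := by
          congr 1
          ext l
          simp [hfu]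
        _ = A := by rw [updateRow_eq_self, hM]

end LocalHom

theorem stmt_5_general {R S : Type*} [CommRing R] [CommRing S] (f : R →+* S) [IsLocalHom f]
    (hf : Function.Surjective f) (n : ℕ) : IsGE R n ↔ IsGE S n := by
  have hsurj := specialLinearGroup_map_surjective (ι := Fin n) hf
  rw [isGE_iff_elementarySubgroup_eq_top, isGE_iff_elementarySubgroup_eq_top,
    ← map_elementarySubgroup hf, ← (Subgroup.comap_injective hsurj).eq_iff,
    Subgroup.comap_map_eq_self ker_specialLinearGroup_map_le_elementarySubgroup,
    Subgroup.comap_top]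

/-- For an ideal `J` contained in the Jacobson radical of `R`, the ring `R` is a
generalized Euclidean ring if and only if `R/J` is. -/
theorem stmt_5 (R : Type*) [CommRing R] (J : Ideal R)
    (hJ : J ≤ (⊥ : Ideal R).jacobson) :
    IsGERing R ↔ IsGERing (R ⧸ J) := by
  have := isLocalHom_of_le_jacobson_bot J hJ
  exact forall₂_congr fun n _ =>
    stmt_5_general (Ideal.Quotient.mk J) Ideal.Quotient.mk_surjective n
end

section
/- Let D be a finite set of positive integers with at least two elements, let e ∈ D with e ∈ {1, 2, 3, 4, 6}, and set η_e = ∏_{d ∈ D \ {e}} Φ_d(ζ_e) ∈ ℤ[ζ_e]. If η_e is a unit of ℤ[ζ_e] and O(D \ {e}) is a GE_2-ring, then O(D) is a GE_2-ring. -/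
/-- The primitive `e`-th root of unity `ζ_e = e^{2πi/e}`. -/
noncomputable def zeta (e : ℕ) : ℂ := Complex.exp (2 * Real.pi * Complex.I / e)

/-- The subring `ℤ[ζ_e]` of `ℂ`. -/
noncomputable def Zzeta (e : ℕ) : Subalgebra ℤ ℂ := Algebra.adjoin ℤ {zeta e}

/-- `ζ_e` as an element of `ℤ[ζ_e]`. -/
noncomputable def zetaEl (e : ℕ) : Zzeta e :=
  ⟨zeta e, Algebra.self_mem_adjoin_singleton ℤ _⟩

/-- `η_e = ∏_{d ∈ D \ {e}} Φ_d(ζ_e)` as an element of `ℤ[ζ_e]`. -/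
noncomputable def eta (D : Finset ℕ) (e : ℕ) : Zzeta e :=
  ∏ d ∈ D.erase e, Polynomial.aeval (zetaEl e) (Polynomial.cyclotomic d ℤ)

open Polynomial hiding eta

/-! ### Elementary matrices -/

section ElementaryMatrices

variable {R S : Type*} [CommRing R] [CommRing S] {n : ℕ}

theorem transvection_map {ι : Type*} [DecidableEq ι] (f : R →+* S) (i j : ι) (c : R) :
    (Matrix.transvection i j c).map f = Matrix.transvection i j (f c) := by
  rw [Matrix.transvection, Matrix.map_add f (map_add f), Matrix.map_one f f.map_zero f.map_one,
    Matrix.map_single, Matrix.transvection]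

theorem IsGE.of_ringEquiv (f : R ≃+* S) (hR : IsGE R n) : IsGE S n := by
  intro A hA
  have closure_le : Submonoid.closure (ElemMatrices n R) ≤
      (Submonoid.closure (ElemMatrices n S)).comap (f : R →+* S).mapMatrix := by
    rw [Submonoid.closure_le]
    rintro _ ⟨i, j, c, hij, rfl⟩
    exact Submonoid.subset_closure ⟨i, j, f c, hij, transvection_map (f : R →+* S) i j c⟩
  have det_eq_one : (A.map f.symm).det = 1 := by
    rw [← RingEquiv.mapMatrix_apply, ← RingEquiv.map_det, hA, map_one]
  have map_mem := closure_le (hR _ det_eq_one)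
  rw [Submonoid.mem_comap] at map_mem
  convert map_mem
  ext i j
  simp

theorem IsGE.prod (hR : IsGE R n) (hS : IsGE S n) : IsGE (R × S) n := by
  let components : Matrix (Fin n) (Fin n) (R × S) →+*
      Matrix (Fin n) (Fin n) R × Matrix (Fin n) (Fin n) S :=
    (RingHom.fst R S).mapMatrix.prod (RingHom.snd R S).mapMatrix
  have components_injective : Function.Injective components := fun M N h => by
    rw [Prod.ext_iff] at h
    ext i j
    · exact congr_fun₂ h.1 i j
    · exact congr_fun₂ h.2 i j
  have components_transvection (i j : Fin n) (c : R × S) :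
      components (Matrix.transvection i j c) =
        (Matrix.transvection i j c.1, Matrix.transvection i j c.2) :=
    Prod.ext (transvection_map (RingHom.fst R S) i j c) (transvection_map (RingHom.snd R S) i j c)
  have prod_le : (Submonoid.closure (ElemMatrices n R)).prod
      (Submonoid.closure (ElemMatrices n S)) ≤
        (Submonoid.closure (ElemMatrices n (R × S))).map components := by
    rw [Submonoid.prod_le_iff, MonoidHom.map_mclosure, MonoidHom.map_mclosure,
      MonoidHom.map_mclosure]
    constructor <;> refine Submonoid.closure_mono ?_
    · rintro _ ⟨_, ⟨i, j, c, hij, rfl⟩, rfl⟩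
      exact ⟨_, ⟨i, j, (c, 0), hij, rfl⟩, by simp [components_transvection]⟩
    · rintro _ ⟨_, ⟨i, j, c, hij, rfl⟩, rfl⟩
      exact ⟨_, ⟨i, j, (0, c), hij, rfl⟩, by simp [components_transvection]⟩
  intro M hM
  refine (Submonoid.mem_map_iff_mem components_injective).1 (prod_le ⟨hR _ ?_, hS _ ?_⟩)
  · exact (RingHom.map_det (RingHom.fst R S) M).symm.trans (by rw [hM, map_one])
  · exact (RingHom.map_det (RingHom.snd R S) M).symm.trans (by rw [hM, map_one])

theorem upper_mem_closure_elemMatrices (c : R) :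
    !![1, c; 0, 1] ∈ Submonoid.closure (ElemMatrices 2 R) := by
  refine Submonoid.subset_closure ⟨0, 1, c, zero_ne_one, ?_⟩
  ext i j
  fin_cases i <;> fin_cases j <;> simp [Matrix.transvection, Matrix.single]

theorem lower_mem_closure_elemMatrices (c : R) :
    !![1, 0; c, 1] ∈ Submonoid.closure (ElemMatrices 2 R) := by
  refine Submonoid.subset_closure ⟨1, 0, c, one_ne_zero, ?_⟩
  ext i j
  fin_cases i <;> fin_cases j <;> simp [Matrix.transvection, Matrix.single]

theorem antidiagonal_mem_closure_elemMatrices {u v : R} (huv : u * v = 1) :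
    !![0, u; -v, 0] ∈ Submonoid.closure (ElemMatrices 2 R) := by
  have factorization :
      !![0, u; -v, 0] = !![1, u; 0, 1] * !![1, 0; -v, 1] * !![1, u; 0, 1] := by
    simp [mul_comm v u, huv]
  rw [factorization]
  exact mul_mem (mul_mem (upper_mem_closure_elemMatrices u) (lower_mem_closure_elemMatrices (-v)))
    (upper_mem_closure_elemMatrices u)

theorem lowerTriangular_mem_closure_elemMatrices {u v : R} (huv : u * v = 1) (c : R) :
    !![u, 0; c, v] ∈ Submonoid.closure (ElemMatrices 2 R) := by
  have factorization :
      !![u, 0; c, v] = !![1, 0; c * v, 1] * (!![0, u; -v, 0] * !![0, -1; -(-1), 0]) := by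
    simp [mul_assoc, mul_comm v u, huv]
  rw [factorization]
  exact mul_mem (lower_mem_closure_elemMatrices _)
    (mul_mem (antidiagonal_mem_closure_elemMatrices huv)
      (antidiagonal_mem_closure_elemMatrices (by ring)))

/-! ### Euclidean rings -/

theorem isGE_two_of_wellFounded {r : R → R → Prop} (hr : WellFounded r)
    (hdiv : ∀ a b : R, b ≠ 0 → ∃ q, r (a - q * b) b) : IsGE R 2 := by
  suffices reduction : ∀ b a c d : R, a * d - b * c = 1 →
      !![a, b; c, d] ∈ Submonoid.closure (ElemMatrices 2 R) by
    intro A hA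
    rw [Matrix.det_fin_two] at hA
    rw [Matrix.eta_fin_two A]
    exact reduction _ _ _ _ hA
  intro b
  induction b using hr.induction with
  | _ b ih =>
    intro a c d hdet
    by_cases hb : b = 0
    · subst hb
      exact lowerTriangular_mem_closure_elemMatrices (by linear_combination hdet) c
    · obtain ⟨q, hq⟩ := hdiv a b hb
      have reduced_mem := ih _ hq (-b) (-d) (c - q * d) (by linear_combination hdet)
      have column_operation : !![a, b; c, d] =
          !![-b, a - q * b; -d, c - q * d] * !![0, -1; -(-1), 0] * !![1, 0; q, 1] := by
        simp [mul_comm]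
      rw [column_operation]
      exact mul_mem (mul_mem reduced_mem
        (antidiagonal_mem_closure_elemMatrices (by ring)))
        (lower_mem_closure_elemMatrices q)

theorem isGE_two_of_euclideanDomain (R : Type*) [EuclideanDomain R] : IsGE R 2 :=
  isGE_two_of_wellFounded EuclideanDomain.r_wellFounded fun a b hb =>
    ⟨a / b, by
      rw [mul_comm, ← EuclideanDomain.mod_eq_sub_mul_div]
      exact EuclideanDomain.mod_lt a hb⟩

theorem isGE_two_of_forall_exists_norm_sub_lt_one {K : Type*} [NormedField K] [Algebra R K]
    [FaithfulSMul R K]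
    (hwf : WellFounded fun a b : R => ‖algebraMap R K a‖ < ‖algebraMap R K b‖)
    (happrox : ∀ w : K, ∃ q : R, ‖w - algebraMap R K q‖ < 1) : IsGE R 2 := by
  refine isGE_two_of_wellFounded hwf fun a b hb => ?_
  obtain ⟨q, hq⟩ := happrox (algebraMap R K a / algebraMap R K b)
  have hb' : algebraMap R K b ≠ 0 := by
    simpa using (FaithfulSMul.algebraMap_injective R K).ne hb
  refine ⟨q, ?_⟩
  calc ‖algebraMap R K (a - q * b)‖
      = ‖algebraMap R K a / algebraMap R K b - algebraMap R K q‖ * ‖algebraMap R K b‖ := by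
        rw [← norm_mul, sub_mul, div_mul_cancel₀ _ hb', map_sub, map_mul]
    _ < ‖algebraMap R K b‖ := mul_lt_of_lt_one_left (norm_pos_iff.2 hb') hq

end ElementaryMatrices

/-! ### Imaginary quadratic orders -/

theorem exists_eq_add_mul_of_mem_adjoin_singleton {R A : Type*} [CommRing R] [CommRing A]
    [Algebra R A] {x : A} {t n : R} (hx : x ^ 2 = algebraMap R A t * x - algebraMap R A n)
    {y : A} (hy : y ∈ Algebra.adjoin R {x}) :
    ∃ a b : R, y = algebraMap R A a + algebraMap R A b * x := by
  induction hy using Algebra.adjoin_induction with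
  | mem y hy => exact ⟨0, 1, by simpa using hy⟩
  | algebraMap r => exact ⟨r, 0, by simp⟩
  | add y₁ y₂ _ _ h₁ h₂ =>
    obtain ⟨⟨a, b, rfl⟩, c, d, rfl⟩ := h₁, h₂
    exact ⟨a + c, b + d, by simp only [map_add]; ring⟩
  | mul y₁ y₂ _ _ h₁ h₂ =>
    obtain ⟨⟨a, b, rfl⟩, c, d, rfl⟩ := h₁, h₂
    refine ⟨a * c - b * d * n, a * d + b * c + b * d * t, ?_⟩
    simp only [map_add, map_sub, map_mul]
    linear_combination algebraMap R A b * algebraMap R A d * hx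

theorem sq_eq_two_re_mul_sub_normSq (z : ℂ) :
    z ^ 2 = (2 * z.re : ℝ) * z - (Complex.normSq z : ℝ) := by
  rw [Complex.normSq_eq_conj_mul_self, ← Complex.add_conj]
  ring

theorem normSq_add_mul (a b : ℝ) (z : ℂ) :
    Complex.normSq (a + b * z) = a ^ 2 + a * b * (2 * z.re) + b ^ 2 * Complex.normSq z := by
  simp only [Complex.normSq_apply, Complex.add_re, Complex.add_im, Complex.re_ofReal_mul,
    Complex.im_ofReal_mul, Complex.ofReal_re, Complex.ofReal_im]
  ring

section ImaginaryQuadratic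

variable {z : ℂ}

theorem exists_int_normSq_eq_of_mem_adjoin {t n : ℤ} (ht : 2 * z.re = t)
    (hn : Complex.normSq z = n) {s : ℂ} (hs : s ∈ Algebra.adjoin ℤ {z}) :
    ∃ k : ℤ, Complex.normSq s = k := by
  have hz := sq_eq_two_re_mul_sub_normSq z
  rw [ht, hn] at hz
  obtain ⟨a, b, rfl⟩ := exists_eq_add_mul_of_mem_adjoin_singleton (t := t) (n := n)
    (by simpa using hz) hs
  refine ⟨a ^ 2 + a * b * t + b ^ 2 * n, ?_⟩
  have normSq_eq := normSq_add_mul a b z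
  rw [ht, hn] at normSq_eq
  exact_mod_cast normSq_eq

/-- Rounding first along `z` and then along `1` leaves an error of squared modulus at most
`(1 + (im z)²) / 4`, which is where the bound `3` comes from. -/
theorem exists_int_normSq_sub_lt_one (him : z.im ≠ 0) (him_sq : z.im ^ 2 < 3) (w : ℂ) :
    ∃ a b : ℤ, Complex.normSq (w - (a + b * z)) < 1 := by
  have sq_sub_round_le (x : ℝ) : (x - round x) ^ 2 ≤ 1 / 4 := by
    calc (x - round x) ^ 2 ≤ (1 / 2) ^ 2 := sq_le_sq.2 (by simpa using abs_sub_round x)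
      _ = 1 / 4 := by norm_num
  set b := round (w.im / z.im)
  set a := round (w.re - b * z.re)
  have re_error : (w.re - b * z.re - a) ^ 2 ≤ 1 / 4 := sq_sub_round_le _
  have im_error : (w.im - b * z.im) ^ 2 < 3 / 4 := by
    calc (w.im - b * z.im) ^ 2 = (w.im / z.im - b) ^ 2 * z.im ^ 2 := by field_simp
      _ ≤ 1 / 4 * z.im ^ 2 := by gcongr; exact sq_sub_round_le _
      _ < 3 / 4 := by linarith
  refine ⟨a, b, ?_⟩
  calc Complex.normSq (w - (a + b * z))
      = (w.re - b * z.re - a) ^ 2 + (w.im - b * z.im) ^ 2 := by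
        simp only [Complex.normSq_apply, Complex.sub_re, Complex.sub_im, Complex.add_re,
          Complex.add_im, Complex.mul_re, Complex.mul_im, Complex.intCast_re, Complex.intCast_im]
        ring
    _ < 1 := by linarith

theorem isGE_two_adjoin_singleton {t n : ℤ} (ht : 2 * z.re = t) (hn : Complex.normSq z = n)
    (him : z.im ≠ 0) (him_sq : z.im ^ 2 < 3) : IsGE (Algebra.adjoin ℤ {z}) 2 := by
  refine isGE_two_of_forall_exists_norm_sub_lt_one (K := ℂ) ?_ fun w => ?_
  · choose k hk using fun s : Algebra.adjoin ℤ {z} => exists_int_normSq_eq_of_mem_adjoin ht hn s.2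
    refine (measure fun s => (k s).toNat).wf.mono fun s s' (hlt : ‖(s : ℂ)‖ < ‖(s' : ℂ)‖) => ?_
    have sq_lt := pow_lt_pow_left₀ hlt (norm_nonneg _) two_ne_zero
    have nonneg := Complex.normSq_nonneg (s : ℂ)
    rw [← Complex.normSq_eq_norm_sq, ← Complex.normSq_eq_norm_sq, hk, hk] at sq_lt
    rw [hk] at nonneg
    norm_cast at sq_lt nonneg
    change (k s).toNat < (k s').toNat
    omega
  · obtain ⟨a, b, hab⟩ := exists_int_normSq_sub_lt_one him him_sq w
    have hz : z ∈ Algebra.adjoin ℤ {z} := Algebra.self_mem_adjoin_singleton ℤ z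
    refine ⟨a + b * ⟨z, hz⟩, ?_⟩
    rw [Complex.normSq_eq_norm_sq, sq_lt_one_iff₀ (norm_nonneg _)] at hab
    simpa using hab

end ImaginaryQuadratic

/-! ### The rings `ℤ[ζ_e]` -/

theorem zeta_isPrimitiveRoot {e : ℕ} (he : 0 < e) : IsPrimitiveRoot (zeta e) e :=
  Complex.isPrimitiveRoot_exp e he.ne'

theorem zeta_eq_exp_mul_I (e : ℕ) :
    zeta e = Complex.exp ((2 * Real.pi / e : ℝ) * Complex.I) := by
  rw [zeta]
  push_cast
  ring_nf

theorem isGE_two_Zzeta_of_two_mul_cos_eq {e : ℕ} (he : 2 < e) {t : ℤ}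
    (ht : 2 * Real.cos (2 * Real.pi / e) = t) : IsGE (Zzeta e) 2 := by
  have hre : (zeta e).re = Real.cos (2 * Real.pi / e) := by
    rw [zeta_eq_exp_mul_I, Complex.exp_ofReal_mul_I_re]
  have him : (zeta e).im = Real.sin (2 * Real.pi / e) := by
    rw [zeta_eq_exp_mul_I, Complex.exp_ofReal_mul_I_im]
  have hsin : 0 < Real.sin (2 * Real.pi / e) := by
    have he' : (2 : ℝ) < e := by exact_mod_cast he
    apply Real.sin_pos_of_pos_of_lt_pi
    · positivity
    · rw [div_lt_iff₀ (by positivity)]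
      nlinarith [Real.pi_pos]
  refine isGE_two_adjoin_singleton (t := t) (n := 1) (by rw [hre, ht]) ?_ ?_ ?_
  · rw [Complex.normSq_apply, hre, him]
    push_cast
    linarith [Real.cos_sq_add_sin_sq (2 * Real.pi / e)]
  · rw [him]
    exact hsin.ne'
  · rw [him]
    linarith [Real.sin_sq_le_one (2 * Real.pi / e)]

theorem isGE_two_Zzeta_of_zeta_eq_intCast {e : ℕ} {m : ℤ} (hm : zeta e = m) :
    IsGE (Zzeta e) 2 := by
  have adjoin_eq_bot : Zzeta e = ⊥ := by
    rw [Zzeta, ← le_bot_iff, Algebra.adjoin_le_iff, Set.singleton_subset_iff, hm]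
    exact intCast_mem _ m
  let equivInt : Zzeta e ≃ₐ[ℤ] ℤ := (Subalgebra.equivOfEq _ _ adjoin_eq_bot).trans
    (Algebra.botEquivOfInjective (algebraMap ℤ ℂ).injective_int)
  exact (isGE_two_of_euclideanDomain ℤ).of_ringEquiv equivInt.toRingEquiv.symm

theorem isGE_two_Zzeta {e : ℕ} (he : e ∈ ({1, 2, 3, 4, 6} : Finset ℕ)) : IsGE (Zzeta e) 2 := by
  simp only [Finset.mem_insert, Finset.mem_singleton] at he
  rcases he with rfl | rfl | rfl | rfl | rfl
  · exact isGE_two_Zzeta_of_zeta_eq_intCast (m := 1)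
      (by simpa using (zeta_isPrimitiveRoot one_pos).pow_eq_one)
  · exact isGE_two_Zzeta_of_zeta_eq_intCast (m := -1)
      (by simpa using (zeta_isPrimitiveRoot two_pos).eq_neg_one_of_two_right)
  · refine isGE_two_Zzeta_of_two_mul_cos_eq (t := -1) (by norm_num) ?_
    have angle : 2 * Real.pi / (3 : ℕ) = Real.pi - Real.pi / 3 := by push_cast; ring
    rw [angle, Real.cos_pi_sub, Real.cos_pi_div_three]
    norm_num
  · refine isGE_two_Zzeta_of_two_mul_cos_eq (t := 0) (by norm_num) ?_
    have angle : 2 * Real.pi / (4 : ℕ) = Real.pi / 2 := by push_cast; ring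
    rw [angle, Real.cos_pi_div_two]
    norm_num
  · refine isGE_two_Zzeta_of_two_mul_cos_eq (t := 1) (by norm_num) ?_
    have angle : 2 * Real.pi / (6 : ℕ) = Real.pi / 3 := by push_cast; ring
    rw [angle, Real.cos_pi_div_three]
    norm_num

/-! ### Splitting off the factor at `e` -/

theorem isCoprime_ker_of_isUnit_apply {A B : Type*} [CommRing A] [CommRing B] {f : A →+* B}
    (hf : Function.Surjective f) {I : Ideal A} {a : A} (haI : a ∈ I) (ha : IsUnit (f a)) :
    IsCoprime (RingHom.ker f) I := by
  obtain ⟨u, hu⟩ := ha.exists_right_inv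
  obtain ⟨b, rfl⟩ := hf u
  refine Ideal.isCoprime_iff_exists.2
    ⟨1 - a * b, ?_, a * b, I.mul_mem_right b haI, sub_add_cancel _ _⟩
  rw [RingHom.mem_ker, map_sub, map_one, map_mul, hu, sub_self]

theorem aeval_zetaEl_surjective (e : ℕ) :
    Function.Surjective (aeval (zetaEl e) : ℤ[X] →ₐ[ℤ] Zzeta e) := by
  intro y
  obtain ⟨p, hp⟩ := Algebra.adjoin_mem_exists_aeval ℤ (zeta e) y.2
  exact ⟨p, Subtype.ext ((aeval_algHom_apply (Zzeta e).val (zetaEl e) p).symm.trans hp)⟩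

theorem ker_aeval_zetaEl {e : ℕ} (he : 0 < e) :
    RingHom.ker (aeval (zetaEl e) : ℤ[X] →ₐ[ℤ] Zzeta e).toRingHom =
      Ideal.span {cyclotomic e ℤ} := by
  have val_injective : Function.Injective (Zzeta e).val := Subtype.val_injective
  have integral : IsIntegral ℤ (zetaEl e) :=
    (isIntegral_algHom_iff (Zzeta e).val val_injective).1 ((zeta_isPrimitiveRoot he).isIntegral he)
  have cyclotomic_eq : cyclotomic e ℤ = minpoly ℤ (zetaEl e) :=
    (cyclotomic_eq_minpoly (zeta_isPrimitiveRoot he) he).trans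
      (minpoly.algHom_eq (Zzeta e).val val_injective (zetaEl e))
  rw [cyclotomic_eq]
  exact minpoly.ker_eval integral

theorem isCoprime_span_cyclotomic_of_isUnit_eta {D : Finset ℕ} {e : ℕ} (he : 0 < e)
    (heta : IsUnit (eta D e)) :
    IsCoprime (Ideal.span {cyclotomic e ℤ}) (⨅ d ∈ D.erase e, Ideal.span {cyclotomic d ℤ}) := by
  have prod_mem : ∏ d ∈ D.erase e, cyclotomic d ℤ ∈
      ⨅ d ∈ D.erase e, Ideal.span {cyclotomic d ℤ} := by
    simp only [Ideal.mem_iInf, Ideal.mem_span_singleton]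
    exact fun d hd => Finset.dvd_prod_of_mem _ hd
  rw [← ker_aeval_zetaEl he]
  refine isCoprime_ker_of_isUnit_apply (aeval_zetaEl_surjective e) prod_mem ?_
  simpa [eta] using heta

/-- The decomposition `O(D) ≅ ℤ[ζ_e] × O(D \ {e})` available when `η_e` is a unit. Each `O(D)` is
encoded as the quotient of `ℤ[X]` by the intersection of the ideals `(Φ_d)`. -/
noncomputable def quotientCyclotomicEquivProd {D : Finset ℕ} {e : ℕ} (he : 0 < e) (heD : e ∈ D)
    (heta : IsUnit (eta D e)) :
    ℤ[X] ⧸ (⨅ d ∈ D, Ideal.span {cyclotomic d ℤ}) ≃+*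
      Zzeta e × (ℤ[X] ⧸ (⨅ d ∈ D.erase e, Ideal.span {cyclotomic d ℤ})) :=
  have iInf_eq_inf : (⨅ d ∈ D, Ideal.span {cyclotomic d ℤ}) =
      Ideal.span {cyclotomic e ℤ} ⊓ ⨅ d ∈ D.erase e, Ideal.span {cyclotomic d ℤ} := by
    rw [← Finset.insert_erase heD, Finset.iInf_insert, Finset.insert_erase heD]
  let equivZzeta : ℤ[X] ⧸ Ideal.span {cyclotomic e ℤ} ≃+* Zzeta e :=
    (Ideal.quotEquivOfEq (ker_aeval_zetaEl he).symm).trans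
      (RingHom.quotientKerEquivOfSurjective (aeval_zetaEl_surjective e))
  (Ideal.quotEquivOfEq iInf_eq_inf).trans <|
    (Ideal.quotientInfEquivQuotientProd _ _
      (isCoprime_span_cyclotomic_of_isUnit_eta he heta)).trans <|
    equivZzeta.prodCongr (RingEquiv.refl _)

/-- If `e ∈ D ∩ {1,2,3,4,6}`, `η_e` is a unit of `ℤ[ζ_e]`, and `O(D \ {e})` is a
`GE_2`-ring, then `O(D)` is a `GE_2`-ring. -/
theorem stmt_9 (D : Finset ℕ) (hpos : ∀ d ∈ D, 0 < d) (hcard : 2 ≤ D.card)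
    (e : ℕ) (he : e ∈ D) (heS : e ∈ ({1, 2, 3, 4, 6} : Finset ℕ))
    (heta : IsUnit (eta D e))
    (hGE : IsGE (Polynomial ℤ ⧸
      (⨅ d ∈ D.erase e, Ideal.span {Polynomial.cyclotomic d ℤ})) 2) :
    IsGE (Polynomial ℤ ⧸ (⨅ d ∈ D, Ideal.span {Polynomial.cyclotomic d ℤ})) 2 := by
  exact ((isGE_two_Zzeta heS).prod hGE).of_ringEquiv
    (quotientCyclotomicEquivProd (hpos e he) he heta).symm
end

section
/- Let D be a finite set of positive integers with at least two elements, let e ∈ D with e ∈ {1, 2, 3, 6}, and set η_e = ∏_{d ∈ D \ {e}} Φ_d(ζ_e) ∈ ℤ[ζ_e]. If the principal ideal η_e ℤ[ζ_e] equals 2 ℤ[ζ_e] and O(D \ {e}) is a GE_2-ring, then O(D) is a GE_2-ring. -/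
namespace GE2

open Matrix (SpecialLinearGroup)
open Matrix.SpecialLinearGroup (transvection transvection_add transvection_coe
  transvection_coeff_zero transvection_inv)
open scoped MatrixGroups

/-! ### Elementary and congruence subgroups -/

section Elementary

variable (n : ℕ) (R : Type*) {S : Type*} [CommRing R] [CommRing S]

/-- The elementary group `E_n(R)`, as a subgroup of `SL_n(R)`. -/
def elementarySubgroup : Subgroup SL(n, R) :=
  Subgroup.closure {g | ∃ (i j : Fin n) (hij : i ≠ j) (c : R), transvection hij c = g}

variable {R} (I : Ideal R)

/-- The relative elementary group of the ideal `I`, with the normal closure taken in `SL_n(R)`;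
it is the usual `E_n(R, I)`, the normal closure in `E_n(R)`, when `SL_n(R) = E_n(R)`. -/
def relElementarySubgroup : Subgroup SL(n, R) :=
  Subgroup.normalClosure {g | ∃ (i j : Fin n) (hij : i ≠ j), ∃ c ∈ I, transvection hij c = g}

/-- The principal congruence subgroup of level `I`. -/
def congruenceSubgroup : Subgroup SL(n, R) :=
  (SpecialLinearGroup.map (Ideal.Quotient.mk I)).ker

instance : (relElementarySubgroup n I).Normal := Subgroup.normalClosure_normal

instance : (congruenceSubgroup n I).Normal := MonoidHom.normal_ker _

variable {n I}

lemma transvection_mem_elementarySubgroup {i j : Fin n} (hij : i ≠ j) (c : R) :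
    transvection hij c ∈ elementarySubgroup n R :=
  Subgroup.subset_closure ⟨i, j, hij, c, rfl⟩

lemma transvection_mem_relElementarySubgroup {i j : Fin n} (hij : i ≠ j) {c : R} (hc : c ∈ I) :
    transvection hij c ∈ relElementarySubgroup n I :=
  Subgroup.subset_normalClosure ⟨i, j, hij, c, hc, rfl⟩

lemma map_transvection (f : R →+* S) {i j : Fin n} (hij : i ≠ j) (c : R) :
    SpecialLinearGroup.map f (transvection hij c) = transvection hij (f c) := by
  ext k l
  simp [transvection_coe, Matrix.single_apply, Matrix.one_apply, apply_ite f]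

lemma map_elementarySubgroup {f : R →+* S} (hf : Function.Surjective f) :
    (elementarySubgroup n R).map (SpecialLinearGroup.map f) = elementarySubgroup n S := by
  rw [elementarySubgroup, MonoidHom.map_closure, elementarySubgroup]
  congr 1
  ext g
  constructor
  · rintro ⟨_, ⟨i, j, hij, c, rfl⟩, rfl⟩
    exact ⟨i, j, hij, f c, (map_transvection f hij c).symm⟩
  · rintro ⟨i, j, hij, c, rfl⟩
    obtain ⟨c, rfl⟩ := hf c
    exact ⟨_, ⟨i, j, hij, c, rfl⟩, map_transvection f hij c⟩

lemma map_eq_one_iff_sub_mem_ker {f : R →+* S} {g : SL(n, R)} :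
    SpecialLinearGroup.map f g = 1 ↔
      ∀ i j, g i j - (1 : Matrix (Fin n) (Fin n) R) i j ∈ RingHom.ker f := by
  rw [Matrix.SpecialLinearGroup.ext_iff]
  simp [RingHom.mem_ker, sub_eq_zero, Matrix.one_apply, apply_ite f]

lemma mem_congruenceSubgroup {g : SL(n, R)} :
    g ∈ congruenceSubgroup n I ↔ ∀ i j, g i j - (1 : Matrix (Fin n) (Fin n) R) i j ∈ I := by
  rw [congruenceSubgroup, MonoidHom.mem_ker, map_eq_one_iff_sub_mem_ker, Ideal.mk_ker]

lemma mem_congruenceSubgroup_ker {f : R →+* S} {g : SL(n, R)} :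
    g ∈ congruenceSubgroup n (RingHom.ker f) ↔ SpecialLinearGroup.map f g = 1 := by
  rw [mem_congruenceSubgroup, map_eq_one_iff_sub_mem_ker]

lemma congruenceSubgroup_bot : congruenceSubgroup n (⊥ : Ideal R) = ⊥ := by
  refine (Subgroup.eq_bot_iff_forall _).2 fun g hg =>
    Matrix.SpecialLinearGroup.ext _ _ fun i j => ?_
  exact sub_eq_zero.1 (mem_congruenceSubgroup.1 hg i j)

lemma congruenceSubgroup_inf (J : Ideal R) :
    congruenceSubgroup n (I ⊓ J) = congruenceSubgroup n I ⊓ congruenceSubgroup n J := by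
  ext g
  simp only [Subgroup.mem_inf, mem_congruenceSubgroup, Ideal.mem_inf, forall_and]

lemma map_congruenceSubgroup_le (f : R →+* S) :
    (congruenceSubgroup n I).map (SpecialLinearGroup.map f) ≤ congruenceSubgroup n (I.map f) := by
  rintro _ ⟨g, hg, rfl⟩
  refine mem_congruenceSubgroup.2 fun i j => ?_
  convert Ideal.mem_map_of_mem f (mem_congruenceSubgroup.1 hg i j) using 1
  simp [Matrix.one_apply, apply_ite f]

lemma relElementarySubgroup_le_congruenceSubgroup :
    relElementarySubgroup n I ≤ congruenceSubgroup n I := by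
  refine Subgroup.normalClosure_le_normal ?_
  rintro _ ⟨i, j, hij, c, hc, rfl⟩
  rw [SetLike.mem_coe, congruenceSubgroup, MonoidHom.mem_ker, map_transvection,
    Ideal.Quotient.eq_zero_iff_mem.2 hc, transvection_coeff_zero]

lemma coe_mem_closure_elemMatrices_iff {g : SL(n, R)} :
    (g : Matrix (Fin n) (Fin n) R) ∈ Submonoid.closure (ElemMatrices n R) ↔
      g ∈ elementarySubgroup n R := by
  set T := {g : SL(n, R) | ∃ (i j : Fin n) (hij : i ≠ j) (c : R), transvection hij c = g}
  have inv_T : T⁻¹ ⊆ T := by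
    rintro g ⟨i, j, hij, c, hg⟩
    exact ⟨i, j, hij, -c, by rw [← transvection_inv, hg, inv_inv]⟩
  have coe_T : Matrix.SpecialLinearGroup.coeMonoidHom '' T = ElemMatrices n R := by
    ext M
    constructor
    · rintro ⟨_, ⟨i, j, hij, c, rfl⟩, rfl⟩
      exact ⟨i, j, c, hij, rfl⟩
    · rintro ⟨i, j, c, hij, rfl⟩
      exact ⟨_, ⟨i, j, hij, c, rfl⟩, rfl⟩
  rw [← coe_T, ← MonoidHom.map_mclosure, elementarySubgroup, ← Subgroup.mem_toSubmonoid,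
    Subgroup.closure_toSubmonoid, Set.union_eq_self_of_subset_right inv_T]
  exact Submonoid.mem_map_iff_mem Subtype.coe_injective

lemma isGE_iff_elementarySubgroup_eq_top : IsGE R n ↔ elementarySubgroup n R = ⊤ := by
  rw [Subgroup.eq_top_iff']
  exact ⟨fun h g => coe_mem_closure_elemMatrices_iff.1 (h g g.2),
    fun h A hA => coe_mem_closure_elemMatrices_iff.2 (h ⟨A, hA⟩)⟩

lemma map_elementarySubgroup_eq_top {f : R →+* S} (hf : Function.Surjective f) (hS : IsGE S n) :
    (elementarySubgroup n R).map (SpecialLinearGroup.map f) = ⊤ := by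
  rw [map_elementarySubgroup hf, isGE_iff_elementarySubgroup_eq_top.1 hS]

lemma isGE_of_ringEquiv (f : R ≃+* S) (hR : IsGE R n) : IsGE S n := by
  rw [isGE_iff_elementarySubgroup_eq_top] at hR ⊢
  rw [← map_elementarySubgroup (f := (f : R →+* S)) f.surjective, hR]
  refine Subgroup.map_top_of_surjective _ fun g =>
    ⟨SpecialLinearGroup.map (f.symm : S →+* R) g, Matrix.SpecialLinearGroup.ext _ _ fun i j => ?_⟩
  exact f.apply_symm_apply (g i j)

end Elementary

/-! ### Gluing along a fiber product -/

section Gluing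

variable {n : ℕ} {R R' L : Type*} [CommRing R] [CommRing R'] [CommRing L]

lemma relElementarySubgroup_map_le {q : R →+* L} (hq : Function.Surjective q) (hL : IsGE L n)
    (I : Ideal R) :
    relElementarySubgroup n (I.map q) ≤
      (elementarySubgroup n R ⊓ congruenceSubgroup n I).map (SpecialLinearGroup.map q) := by
  have hE := map_elementarySubgroup_eq_top hq hL
  have normal : ((elementarySubgroup n R ⊓ congruenceSubgroup n I).map
      (SpecialLinearGroup.map q)).Normal := by
    refine ⟨?_⟩
    rintro _ ⟨m, ⟨hmE, hmI⟩, rfl⟩ g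
    obtain ⟨h, hhE, rfl⟩ := hE ▸ Subgroup.mem_top g
    exact ⟨h * m * h⁻¹, ⟨Subgroup.mul_mem _ (Subgroup.mul_mem _ hhE hmE) (Subgroup.inv_mem _ hhE),
      (inferInstance : (congruenceSubgroup n I).Normal).conj_mem m hmI h⟩,
      by simp only [map_mul, map_inv]⟩
  refine Subgroup.normalClosure_le_normal ?_
  rintro _ ⟨i, j, hij, c, hc, rfl⟩
  obtain ⟨b, hb, rfl⟩ := (Ideal.mem_map_iff_of_surjective q hq).1 hc
  exact ⟨transvection hij b, ⟨transvection_mem_elementarySubgroup hij b,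
    relElementarySubgroup_le_congruenceSubgroup (transvection_mem_relElementarySubgroup hij hb)⟩,
    map_transvection q hij b⟩

lemma congruenceSubgroup_le_elementarySubgroup {I : Ideal R} {q : R →+* L}
    (hq : Function.Surjective q) (hIq : I ⊓ RingHom.ker q = ⊥) (hL : IsGE L n)
    (hI : congruenceSubgroup n (I.map q) ≤ relElementarySubgroup n (I.map q)) :
    congruenceSubgroup n I ≤ elementarySubgroup n R := by
  intro g hg
  obtain ⟨m, ⟨hmE, hmI⟩, hmg⟩ := relElementarySubgroup_map_le hq hL I
    (hI (map_congruenceSubgroup_le q ⟨g, hg, rfl⟩))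
  have hgm : g * m⁻¹ ∈ congruenceSubgroup n (I ⊓ RingHom.ker q) := by
    rw [congruenceSubgroup_inf]
    refine ⟨Subgroup.mul_mem _ hg (Subgroup.inv_mem _ hmI), mem_congruenceSubgroup_ker.2 ?_⟩
    rw [map_mul, map_inv, hmg, mul_inv_cancel]
  rw [hIq, congruenceSubgroup_bot, Subgroup.mem_bot, mul_inv_eq_one] at hgm
  exact hgm ▸ hmE

lemma isGE_of_ker_inf_ker_eq_bot {p : R →+* R'} {q : R →+* L} (hp : Function.Surjective p)
    (hq : Function.Surjective q) (hpq : RingHom.ker p ⊓ RingHom.ker q = ⊥) (hR' : IsGE R' n)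
    (hL : IsGE L n)
    (hI : congruenceSubgroup n ((RingHom.ker p).map q) ≤
      relElementarySubgroup n ((RingHom.ker p).map q)) : IsGE R n := by
  rw [isGE_iff_elementarySubgroup_eq_top, Subgroup.eq_top_iff']
  intro g
  obtain ⟨h, hhE, hh⟩ := map_elementarySubgroup_eq_top hp hR' ▸
    Subgroup.mem_top (SpecialLinearGroup.map p g)
  have hgh : g * h⁻¹ ∈ elementarySubgroup n R := by
    refine congruenceSubgroup_le_elementarySubgroup hq hpq hL hI (mem_congruenceSubgroup_ker.2 ?_)
    rw [map_mul, map_inv, hh, mul_inv_cancel]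
  exact (Subgroup.mul_mem_cancel_right _ (inv_mem hhE)).1 hgh

lemma isGE_quotient_inf_ker {J : Ideal R} {f : R →+* L} (hf : Function.Surjective f)
    (hJ : IsGE (R ⧸ J) n) (hL : IsGE L n)
    (hI : congruenceSubgroup n (J.map f) ≤ relElementarySubgroup n (J.map f)) :
    IsGE (R ⧸ J ⊓ RingHom.ker f) n := by
  have hfJ : ∀ a ∈ J ⊓ RingHom.ker f, f a = 0 := fun _ ha => ha.2
  have hmap : (RingHom.ker (Ideal.Quotient.factor (inf_le_left : J ⊓ RingHom.ker f ≤ J))).map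
      (Ideal.Quotient.lift _ f hfJ) = J.map f := by
    rw [Ideal.Quotient.factor_ker, Ideal.map_map, Ideal.Quotient.lift_comp_mk]
  refine isGE_of_ker_inf_ker_eq_bot (Ideal.Quotient.factor_surjective inf_le_left)
    (Ideal.Quotient.lift_surjective_of_surjective _ hfJ hf) (eq_bot_iff.2 ?_) hJ hL (by rwa [hmap])
  rintro ⟨a⟩ ⟨ha, hfa⟩
  exact Ideal.Quotient.eq_zero_iff_mem.2 ⟨Ideal.Quotient.eq_zero_iff_mem.1 ha, hfa⟩

end Gluing

/-! ### The congruence subgroups of `SL₂` -/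

section SLTwo

variable {R : Type*} [CommRing R]

/-- The elementary matrix `!![1, a; 0, 1]`. -/
abbrev upper (a : R) : SL(2, R) := transvection zero_ne_one a

/-- The elementary matrix `!![1, 0; a, 1]`. -/
abbrev lower (a : R) : SL(2, R) := transvection one_ne_zero a

/-- The Weyl element of `SL₂`, which conjugates lower to upper triangular matrices. -/
def weyl : SL(2, R) := ⟨!![0, 1; -1, 0], by simp⟩

lemma coe_upper (a : R) : (upper a : Matrix (Fin 2) (Fin 2) R) = !![1, a; 0, 1] := by
  ext i j; fin_cases i <;> fin_cases j <;> simp [transvection_coe]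

lemma coe_lower (a : R) : (lower a : Matrix (Fin 2) (Fin 2) R) = !![1, 0; a, 1] := by
  ext i j; fin_cases i <;> fin_cases j <;> simp [transvection_coe]

lemma coe_weyl : ((weyl : SL(2, R)) : Matrix (Fin 2) (Fin 2) R) = !![0, 1; -1, 0] := rfl

lemma lower_zero : lower (0 : R) = 1 := transvection_coeff_zero _

lemma lower_add (a b : R) : lower (a + b) = lower a * lower b := transvection_add _ a b

lemma inv_lower (a : R) : (lower a)⁻¹ = lower (-a) := transvection_inv _ a

lemma weyl_eq : (weyl : SL(2, R)) = upper 1 * lower (-1) * upper 1 := by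
  ext i j
  fin_cases i <;> fin_cases j <;> simp [coe_weyl, coe_upper, coe_lower]

lemma weyl_mem {H : Subgroup SL(2, R)} (hu : upper 1 ∈ H) (hl : lower (-1) ∈ H) : weyl ∈ H := by
  rw [weyl_eq]
  exact mul_mem (mul_mem hu hl) hu

lemma upper_mul_weyl (a : R) : upper a * weyl = weyl * lower (-a) := by
  ext i j
  fin_cases i <;> fin_cases j <;> simp [coe_weyl, coe_upper, coe_lower]

variable (R) in
/-- The standard Borel subgroup of `SL₂(R)`, of upper triangular matrices. -/
def borel : Subgroup SL(2, R) where
  carrier := {g | g 1 0 = 0}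
  one_mem' := by simp
  mul_mem' {g h} hg hh := by
    rw [Set.mem_ofPred_eq] at *
    simp [Matrix.mul_apply, hg, hh]
  inv_mem' {g} hg := by
    rw [Set.mem_ofPred_eq] at *
    simp [Matrix.adjugate_fin_two, hg]

lemma mem_borel {g : SL(2, R)} : g ∈ borel R ↔ g 1 0 = 0 := Iff.rfl

lemma upper_mem_borel (a : R) : upper a ∈ borel R := by simp [mem_borel, coe_upper]

lemma eq_of_mem_borel {g : SL(2, R)} (hg : g ∈ borel R) :
    g = (lower (g 1 1))⁻¹ * upper (g 0 0 - 1) * lower (g 1 1) *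
      (lower (1 - g 1 1) * upper (g 1 1 - 1 + g 1 1 * g 0 1)) := by
  have hdet : g 0 0 * g 1 1 = 1 := by
    have := g.det_coe
    rwa [Matrix.det_fin_two, mem_borel.1 hg, mul_zero, sub_zero] at this
  rw [inv_lower]
  ext i j
  fin_cases i <;> fin_cases j <;>
    simp only [coe_upper, coe_lower, mem_borel.1 hg, Matrix.SpecialLinearGroup.coe_mul,
      Matrix.mul_apply, Fin.sum_univ_two, Fin.zero_eta, Fin.mk_one, Matrix.of_apply,
      Matrix.cons_val', Matrix.cons_val_zero, Matrix.cons_val_one]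
  · ring
  · linear_combination -(1 + g 0 1) * hdet
  · linear_combination hdet
  · linear_combination g 1 1 * (1 + g 0 1) * hdet

lemma borel_le_elementarySubgroup : borel R ≤ elementarySubgroup 2 R := by
  intro g hg
  rw [eq_of_mem_borel hg, inv_lower]
  have lower_mem (a : R) : lower a ∈ elementarySubgroup 2 R :=
    transvection_mem_elementarySubgroup _ a
  have upper_mem (a : R) : upper a ∈ elementarySubgroup 2 R :=
    transvection_mem_elementarySubgroup _ a
  exact mul_mem (mul_mem (mul_mem (lower_mem _) (upper_mem _)) (lower_mem _))
    (mul_mem (lower_mem _) (upper_mem _))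

variable {I : Ideal R}

lemma borel_inf_congruenceSubgroup_le :
    borel R ⊓ congruenceSubgroup 2 I ≤ relElementarySubgroup 2 I := by
  rintro g ⟨hgB, hgI⟩
  have h00 : g 0 0 - 1 ∈ I := by simpa using mem_congruenceSubgroup.1 hgI 0 0
  have h11 : g 1 1 - 1 ∈ I := by simpa using mem_congruenceSubgroup.1 hgI 1 1
  have h01 : g 0 1 ∈ I := by simpa using mem_congruenceSubgroup.1 hgI 0 1
  rw [eq_of_mem_borel hgB]
  refine mul_mem ?_ (mul_mem ?_ ?_)
  · exact Subgroup.Normal.conj_mem' inferInstance _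
      (transvection_mem_relElementarySubgroup _ h00) _
  · exact transvection_mem_relElementarySubgroup _ (by rwa [← neg_mem_iff, neg_sub])
  · exact transvection_mem_relElementarySubgroup _ (add_mem h11 (I.mul_mem_left _ h01))

/-- `g` has a Bruhat normal form modulo `relElementarySubgroup 2 I`: its class is that of an element
of `B U⁻` or of `B w`, where `B` is the Borel subgroup, `U⁻` the group of all `lower b`, and `w` the
Weyl element. -/
def HasBruhatForm (I : Ideal R) (g : SL(2, R)) : Prop :=
  ∃ h ∈ relElementarySubgroup 2 I ⊔ borel R, (∃ b, g = h * lower b) ∨ g = h * weyl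

lemma HasBruhatForm.mul_lower {g : SL(2, R)} (hg : HasBruhatForm I g) (c : R) :
    HasBruhatForm I (g * lower c) := by
  obtain ⟨h, hh, ⟨b, rfl⟩ | rfl⟩ := hg
  · exact ⟨h, hh, Or.inl ⟨b + c, by rw [mul_assoc, ← lower_add]⟩⟩
  · have weyl_mul_lower : weyl * lower c = upper (-c) * weyl := by rw [upper_mul_weyl, neg_neg]
    exact ⟨h * upper (-c), mul_mem hh (Subgroup.mem_sup_right (upper_mem_borel _)),
      Or.inr (by rw [mul_assoc, weyl_mul_lower, mul_assoc])⟩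

lemma weyl_mul_weyl_mem_borel : (weyl * weyl : SL(2, R)) ∈ borel R := by
  simp [mem_borel, coe_weyl]

lemma lower_mul_weyl_mul_lower_mem_borel (u : Rˣ) :
    lower (u : R) * weyl * lower ((u⁻¹ : Rˣ) : R) ∈ borel R := by
  simp [mem_borel, coe_weyl, coe_lower]

/-- Every residue class modulo `I` is zero or contains a unit. -/
def UnitsRepresent (I : Ideal R) : Prop := ∀ a : R, a ∈ I ∨ ∃ u : Rˣ, a - u ∈ I

lemma UnitsRepresent.map {S : Type*} [CommRing S] {f : R →+* S} (hf : Function.Surjective f)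
    (hI : UnitsRepresent I) : UnitsRepresent (I.map f) := by
  intro b
  obtain ⟨a, rfl⟩ := hf b
  refine (hI a).imp (Ideal.mem_map_of_mem f) fun ⟨u, hu⟩ => ⟨Units.map f u, ?_⟩
  rw [Units.coe_map, MonoidHom.coe_coe, ← map_sub]
  exact Ideal.mem_map_of_mem f hu

lemma HasBruhatForm.mul_weyl (hI : UnitsRepresent I) {g : SL(2, R)} (hg : HasBruhatForm I g) :
    HasBruhatForm I (g * weyl) := by
  have lower_mem {b : R} (hb : b ∈ I) : lower b ∈ relElementarySubgroup 2 I ⊔ borel R :=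
    Subgroup.mem_sup_left (transvection_mem_relElementarySubgroup _ hb)
  obtain ⟨h, hh, ⟨b, rfl⟩ | rfl⟩ := hg
  · rcases hI b with hb | ⟨u, hu⟩
    · exact ⟨h * lower b, mul_mem hh (lower_mem hb), Or.inr rfl⟩
    · refine ⟨h * lower (b - u) * (lower (u : R) * weyl * lower ((u⁻¹ : Rˣ) : R)),
        mul_mem (mul_mem hh (lower_mem hu))
          (Subgroup.mem_sup_right (lower_mul_weyl_mul_lower_mem_borel u)),
        Or.inl ⟨-((u⁻¹ : Rˣ) : R), ?_⟩⟩
      have lower_b : lower b = lower (b - u) * lower (u : R) := by rw [← lower_add, sub_add_cancel]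
      rw [← inv_lower, lower_b]
      group
  · refine ⟨h * (weyl * weyl), mul_mem hh (Subgroup.mem_sup_right weyl_mul_weyl_mem_borel),
      Or.inl ⟨0, ?_⟩⟩
    rw [lower_zero, mul_one, mul_assoc]

lemma upper_eq_weyl_mul_lower (a : R) :
    upper a = weyl * lower (-a) * weyl * weyl * weyl := by
  ext i j
  fin_cases i <;> fin_cases j <;> simp [coe_weyl, coe_upper, coe_lower]

lemma HasBruhatForm.mul_transvection (hI : UnitsRepresent I) {g : SL(2, R)}
    (hg : HasBruhatForm I g) {i j : Fin 2} (hij : i ≠ j) (c : R) :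
    HasBruhatForm I (g * transvection hij c) := by
  obtain ⟨rfl, rfl⟩ | ⟨rfl, rfl⟩ : i = 0 ∧ j = 1 ∨ i = 1 ∧ j = 0 := by omega
  · change HasBruhatForm I (g * upper c)
    rw [upper_eq_weyl_mul_lower]
    simpa only [mul_assoc] using
      (((((hg.mul_weyl hI).mul_lower (-c)).mul_weyl hI).mul_weyl hI).mul_weyl hI)
  · exact hg.mul_lower c

lemma hasBruhatForm_of_mem_elementarySubgroup (hI : UnitsRepresent I) {g : SL(2, R)}
    (hg : g ∈ elementarySubgroup 2 R) : HasBruhatForm I g := by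
  induction hg using Subgroup.closure_induction_right with
  | one => exact ⟨1, one_mem _, Or.inl ⟨0, by rw [lower_zero, one_mul]⟩⟩
  | mul_right x _ y hy hx =>
    obtain ⟨i, j, hij, c, rfl⟩ := hy
    exact hx.mul_transvection hI hij c
  | mul_inv_cancel x _ y hy hx =>
    obtain ⟨i, j, hij, c, rfl⟩ := hy
    exact transvection_inv hij c ▸ hx.mul_transvection hI hij (-c)

lemma HasBruhatForm.mem_sup_of_mem_congruenceSubgroup {g : SL(2, R)} (hg : HasBruhatForm I g)
    (hgI : g ∈ congruenceSubgroup 2 I) : g ∈ relElementarySubgroup 2 I ⊔ borel R := by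
  obtain ⟨h, hh, hgh⟩ := hg
  obtain ⟨m, hm, k, hk, rfl⟩ := Subgroup.mem_sup_of_normal_left.1 hh
  have mem_of_mul {x : SL(2, R)} (hx : m * k * x ∈ congruenceSubgroup 2 I) :
      k * x ∈ congruenceSubgroup 2 I := by
    rw [mul_assoc] at hx
    exact (Subgroup.mul_mem_cancel_left _ (relElementarySubgroup_le_congruenceSubgroup hm)).1 hx
  obtain ⟨b, rfl⟩ | rfl := hgh
  · have h10 : k 1 1 * b ∈ I := by
      simpa [coe_lower, Matrix.mul_apply, mem_borel.1 hk] using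
        mem_congruenceSubgroup.1 (mem_of_mul hgI) 1 0
    have h11 : k 1 1 - 1 ∈ I := by
      simpa [coe_lower, Matrix.mul_apply, mem_borel.1 hk] using
        mem_congruenceSubgroup.1 (mem_of_mul hgI) 1 1
    have hb : b ∈ I := by
      convert sub_mem h10 (I.mul_mem_right b h11) using 1
      ring
    exact mul_mem hh (Subgroup.mem_sup_left (transvection_mem_relElementarySubgroup _ hb))
  · have one_mem : (1 : R) ∈ I := by
      simpa [coe_weyl, Matrix.mul_apply, mem_borel.1 hk] using
        mem_congruenceSubgroup.1 (mem_of_mul hgI) 1 1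
    exact mul_mem hh (Subgroup.mem_sup_left (weyl_mem
      (transvection_mem_relElementarySubgroup _ one_mem)
      (transvection_mem_relElementarySubgroup _ (neg_mem one_mem))))

theorem congruenceSubgroup_le_relElementarySubgroup (hR : IsGE R 2) (hI : UnitsRepresent I) :
    congruenceSubgroup 2 I ≤ relElementarySubgroup 2 I := by
  intro g hg
  have hgE : g ∈ elementarySubgroup 2 R := by
    rw [isGE_iff_elementarySubgroup_eq_top.1 hR]
    exact Subgroup.mem_top g
  obtain ⟨m, hm, k, hk, rfl⟩ := Subgroup.mem_sup_of_normal_left.1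
    ((hasBruhatForm_of_mem_elementarySubgroup hI hgE).mem_sup_of_mem_congruenceSubgroup hg)
  have hkI : k ∈ congruenceSubgroup 2 I :=
    (Subgroup.mul_mem_cancel_left _ (relElementarySubgroup_le_congruenceSubgroup hm)).1 hg
  exact mul_mem hm (borel_inf_congruenceSubgroup_le ⟨hk, hkI⟩)

end SLTwo

/-! ### Euclidean rings -/

section Euclidean

variable {R : Type*} [CommRing R]

lemma isGE_two_of_exists_sub_mul_lt {α : Type*} [LT α] [WellFoundedLT α] (N : R → α)
    (hN : ∀ a b : R, b ≠ 0 → ∃ q, N (a - q * b) < N b) : IsGE R 2 := by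
  rw [isGE_iff_elementarySubgroup_eq_top, Subgroup.eq_top_iff']
  suffices ∀ (x : α) (g : SL(2, R)), N (g 1 0) = x → g ∈ elementarySubgroup 2 R from
    fun g => this _ g rfl
  intro x
  induction x using WellFoundedLT.induction with
  | ind x ih =>
    rintro g rfl
    by_cases hg : g 1 0 = 0
    · exact borel_le_elementarySubgroup hg
    · obtain ⟨q, hq⟩ := hN (g 0 0) (g 1 0) hg
      have hweyl : weyl ∈ elementarySubgroup 2 R :=
        weyl_mem (transvection_mem_elementarySubgroup _ _) (transvection_mem_elementarySubgroup _ _)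
      have hentry : (weyl⁻¹ * (upper (-q) * g) : SL(2, R)) 1 0 = g 0 0 - q * g 1 0 := by
        rw [Matrix.SpecialLinearGroup.coe_mul, Matrix.SpecialLinearGroup.coe_inv,
          Matrix.SpecialLinearGroup.coe_mul, coe_weyl, coe_upper,
          Matrix.eta_fin_two (g : Matrix _ _ R)]
        simp [Matrix.adjugate_fin_two, sub_eq_add_neg]
      have hmem := ih _ hq _ (congrArg N hentry)
      rwa [Subgroup.mul_mem_cancel_left _ (inv_mem hweyl), Subgroup.mul_mem_cancel_left _
        (transvection_mem_elementarySubgroup _ _)] at hmem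

lemma isGE_int : IsGE ℤ 2 :=
  isGE_two_of_exists_sub_mul_lt Int.natAbs fun a b hb => ⟨a / b, by
    rw [mul_comm, ← Int.emod_def]
    have h0 := Int.emod_nonneg a hb
    have hlt := Int.emod_lt_abs a hb
    rw [Int.abs_eq_natAbs] at hlt
    omega⟩

lemma unitsRepresent_int : UnitsRepresent (Ideal.span {(2 : ℤ)}) := by
  intro a
  rw [Ideal.mem_span_singleton, ← even_iff_two_dvd]
  rcases Int.even_or_odd a with ha | ha
  · exact Or.inl ha
  · exact Or.inr ⟨1, Ideal.mem_span_singleton.2 (ha.sub_odd odd_one).two_dvd⟩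

end Euclidean

/-! ### The Eisenstein integers -/

section Eisenstein

/-- The Eisenstein integers `ℤ[ω]`, with `ω² = -1 - ω`; `⟨r, s⟩` stands for `r + s ω`. -/
abbrev EisensteinInt := QuadraticAlgebra ℤ (-1) (-1)

namespace EisensteinInt

open QuadraticAlgebra (norm)
open scoped QuadraticAlgebra

lemma four_mul_norm (z : EisensteinInt) : 4 * norm z = (2 * z.re - z.im) ^ 2 + 3 * z.im ^ 2 := by
  rw [QuadraticAlgebra.norm_def]
  ring

lemma norm_nonneg (z : EisensteinInt) : 0 ≤ norm z := by
  nlinarith [four_mul_norm z, sq_nonneg (2 * z.re - z.im), sq_nonneg z.im]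

lemma norm_pos {z : EisensteinInt} (hz : z ≠ 0) : 0 < norm z := by
  refine (norm_nonneg z).lt_of_ne' fun h => hz ?_
  have him : z.im = 0 := by nlinarith [four_mul_norm z, sq_nonneg (2 * z.re - z.im)]
  have hre : z.re = 0 := by nlinarith [four_mul_norm z]
  exact QuadraticAlgebra.ext hre him

lemma norm_lt_sq {z : EisensteinInt} {n : ℤ} (hn : 0 < n) (hre : 2 * |z.re| ≤ n)
    (him : 2 * |z.im| ≤ n) : norm z < n ^ 2 := by
  rw [← abs_two, ← abs_mul, abs_le] at hre him
  nlinarith [four_mul_norm z]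

lemma two_mul_abs_bmod_le (a : ℤ) {n : ℕ} (hn : 0 < n) : 2 * |a.bmod n| ≤ n := by
  have := Int.le_bmod (x := a) hn
  have := Int.bmod_le (x := a) hn
  rw [← abs_two, ← abs_mul, abs_le]
  omega

lemma exists_norm_sub_mul_lt (x : EisensteinInt) {y : EisensteinInt} (hy : y ≠ 0) :
    ∃ q, norm (x - q * y) < norm y := by
  obtain ⟨n, hn⟩ := Int.eq_ofNat_of_zero_le (norm_nonneg y)
  have hpos : 0 < n := by have := norm_pos hy; omega
  let z := x * star y
  let q : EisensteinInt := ⟨z.re.bdiv n, z.im.bdiv n⟩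
  have hr : (x - q * y) * star y = ⟨z.re.bmod n, z.im.bmod n⟩ := by
    rw [sub_mul, mul_assoc, ← QuadraticAlgebra.algebraMap_norm_eq_mul_star, hn]
    ext <;> simp [q, z, Int.bmod_eq_self_sub_bdiv_mul]
  have hlt : norm ((x - q * y) * star y) < (n : ℤ) ^ 2 := by
    rw [hr]
    exact norm_lt_sq (by exact_mod_cast hpos) (two_mul_abs_bmod_le _ hpos)
      (two_mul_abs_bmod_le _ hpos)
  rw [map_mul, QuadraticAlgebra.norm_star, hn] at hlt
  refine ⟨q, ?_⟩
  rw [hn]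
  nlinarith

lemma isGE : IsGE EisensteinInt 2 :=
  isGE_two_of_exists_sub_mul_lt (fun z => (norm z).toNat) fun x _ hy => by
    obtain ⟨q, hq⟩ := exists_norm_sub_mul_lt x hy
    exact ⟨q, (Int.toNat_lt_toNat (norm_pos hy)).2 hq⟩

/-- The unit `ω` of `ℤ[ω]`, with inverse `-1 - ω`. -/
def omegaUnit : EisensteinIntˣ := ⟨⟨0, 1⟩, ⟨-1, -1⟩, by ext <;> simp, by ext <;> simp⟩

lemma mem_span_two {z : EisensteinInt} (hre : Even z.re) (him : Even z.im) :
    z ∈ Ideal.span {(2 : EisensteinInt)} := by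
  obtain ⟨a, ha⟩ := hre
  obtain ⟨b, hb⟩ := him
  refine Ideal.mem_span_singleton'.2 ⟨⟨a, b⟩, ?_⟩
  rw [mul_two]
  exact QuadraticAlgebra.ext ha.symm hb.symm

lemma unitsRepresent : UnitsRepresent (Ideal.span {(2 : EisensteinInt)}) := by
  intro z
  rcases Int.even_or_odd z.re with hre | hre <;> rcases Int.even_or_odd z.im with him | him
  · exact Or.inl (mem_span_two hre him)
  · exact Or.inr ⟨omegaUnit, mem_span_two (by simpa [omegaUnit])
      (by simpa [omegaUnit] using him.sub_odd odd_one)⟩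
  · exact Or.inr ⟨1, mem_span_two (by simpa using hre.sub_odd odd_one) (by simpa)⟩
  · exact Or.inr ⟨omegaUnit⁻¹, mem_span_two (by simpa [omegaUnit] using hre.add_odd odd_one)
      (by simpa [omegaUnit] using him.add_odd odd_one)⟩

end EisensteinInt

end Eisenstein

/-! ### The rings `ℤ[ζ_e]` for `e ∈ {1, 2, 3, 6}` -/

section Zzeta

lemma nonempty_quadraticAlgebra_ringEquiv_adjoin {a b : ℤ} {z : ℂ} (hz : z * z = a + b * z)
    (him : z.im ≠ 0) : Nonempty (QuadraticAlgebra ℤ a b ≃+* Algebra.adjoin ℤ {z}) := by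
  let f : QuadraticAlgebra ℤ a b →ₐ[ℤ] ℂ :=
    QuadraticAlgebra.lift ⟨z, by simpa only [zsmul_eq_mul, mul_one] using hz⟩
  have f_apply (x : QuadraticAlgebra ℤ a b) : f x = x.re • 1 + x.im • z := rfl
  have hrange : f.range = Algebra.adjoin ℤ {z} := by
    refine le_antisymm ?_ (Algebra.adjoin_singleton_le ⟨⟨0, 1⟩, by simp [f_apply]⟩)
    rintro _ ⟨x, rfl⟩
    exact add_mem (zsmul_mem (one_mem _) _)
      (zsmul_mem (Algebra.self_mem_adjoin_singleton ℤ z) _)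
  have hinj : Function.Injective f := (injective_iff_map_eq_zero f).2 fun x hx => by
    have him0 : x.im = 0 := by simpa [f_apply, him] using congrArg Complex.im hx
    have hre0 : x.re = 0 := by simpa [f_apply, him0] using hx
    exact QuadraticAlgebra.ext hre0 him0
  exact ⟨((AlgEquiv.ofInjective f hinj).trans (Subalgebra.equivOfEq _ _ hrange)).toRingEquiv⟩

lemma nonempty_int_ringEquiv_adjoin_intCast {A : Type*} [Ring A] [CharZero A] (n : ℤ) :
    Nonempty (ℤ ≃+* Algebra.adjoin ℤ {(n : A)}) := by
  rw [Algebra.adjoin_singleton_intCast]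
  exact ⟨(Algebra.botEquivOfInjective (algebraMap ℤ A).injective_int).symm.toRingEquiv⟩

lemma zeta_one : zeta 1 = (1 : ℤ) := by
  rw [zeta, Nat.cast_one, div_one, Complex.exp_two_pi_mul_I, Int.cast_one]

lemma zeta_two : zeta 2 = (-1 : ℤ) := by
  rw [zeta, Nat.cast_ofNat, mul_assoc, mul_div_cancel_left₀ _ two_ne_zero, Complex.exp_pi_mul_I,
    Int.cast_neg, Int.cast_one]

lemma zeta_six : zeta 6 = ⟨1 / 2, √3 / 2⟩ := by
  have harg : (2 * Real.pi * Complex.I / (6 : ℕ) : ℂ) = (Real.pi / 3 : ℝ) * Complex.I := by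
    push_cast
    ring
  rw [zeta, harg]
  apply Complex.ext
  · rw [Complex.exp_ofReal_mul_I_re, Real.cos_pi_div_three]
  · rw [Complex.exp_ofReal_mul_I_im, Real.sin_pi_div_three]

lemma zeta_three : zeta 3 = ⟨-1 / 2, √3 / 2⟩ := by
  have harg : (2 * Real.pi * Complex.I / (3 : ℕ) : ℂ) =
      (Real.pi - Real.pi / 3 : ℝ) * Complex.I := by
    push_cast
    ring
  rw [zeta, harg]
  apply Complex.ext
  · rw [Complex.exp_ofReal_mul_I_re, Real.cos_pi_sub, Real.cos_pi_div_three, neg_div]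
  · rw [Complex.exp_ofReal_mul_I_im, Real.sin_pi_sub, Real.sin_pi_div_three]

lemma zeta_six_eq_zeta_three_add_one : zeta 6 = zeta 3 + 1 := by
  rw [zeta_three, zeta_six]
  apply Complex.ext
  · norm_num [Complex.add_re]
  · simp

lemma zeta_three_mul_self : zeta 3 * zeta 3 = (-1 : ℤ) + (-1 : ℤ) * zeta 3 := by
  have hsq : √3 * √3 = 3 := Real.mul_self_sqrt (by norm_num)
  rw [zeta_three]
  apply Complex.ext
  · simp only [Complex.mul_re, Complex.add_re, Complex.neg_re, Complex.one_re, Int.cast_neg,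
      Int.cast_one, neg_mul, one_mul]
    linarith
  · simp only [Complex.mul_im, Complex.add_im, Complex.neg_im, Complex.one_im, Int.cast_neg,
      Int.cast_one, neg_mul, one_mul]
    ring

lemma Zzeta_six : Zzeta 6 = Zzeta 3 := by
  have hsub : zeta 3 = zeta 6 - 1 := by rw [zeta_six_eq_zeta_three_add_one, add_sub_cancel_right]
  refine le_antisymm (Algebra.adjoin_singleton_le ?_) (Algebra.adjoin_singleton_le ?_)
  · rw [zeta_six_eq_zeta_three_add_one]
    exact add_mem (Algebra.self_mem_adjoin_singleton ℤ _) (one_mem _)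
  · rw [hsub]
    exact sub_mem (Algebra.self_mem_adjoin_singleton ℤ _) (one_mem _)

lemma nonempty_eisensteinInt_ringEquiv_Zzeta_three : Nonempty (EisensteinInt ≃+* Zzeta 3) :=
  nonempty_quadraticAlgebra_ringEquiv_adjoin zeta_three_mul_self (by simp [zeta_three])

lemma nonempty_ringEquiv_Zzeta {e : ℕ} (he : e ∈ ({1, 2, 3, 6} : Finset ℕ)) :
    Nonempty (ℤ ≃+* Zzeta e) ∨ Nonempty (EisensteinInt ≃+* Zzeta e) := by
  simp only [Finset.mem_insert, Finset.mem_singleton] at he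
  rcases he with rfl | rfl | rfl | rfl
  · left
    rw [Zzeta, zeta_one]
    exact nonempty_int_ringEquiv_adjoin_intCast 1
  · left
    rw [Zzeta, zeta_two]
    exact nonempty_int_ringEquiv_adjoin_intCast (-1)
  · exact Or.inr nonempty_eisensteinInt_ringEquiv_Zzeta_three
  · exact Or.inr (Zzeta_six ▸ nonempty_eisensteinInt_ringEquiv_Zzeta_three)

lemma UnitsRepresent.of_ringEquiv_span_two {R S : Type*} [CommRing R] [CommRing S] (f : R ≃+* S)
    (hR : UnitsRepresent (Ideal.span {(2 : R)})) : UnitsRepresent (Ideal.span {(2 : S)}) := by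
  have hmap := hR.map (f := (f : R →+* S)) f.surjective
  rwa [Ideal.map_span, Set.image_singleton, map_ofNat] at hmap

lemma isGE_Zzeta {e : ℕ} (he : e ∈ ({1, 2, 3, 6} : Finset ℕ)) : IsGE (Zzeta e) 2 := by
  rcases nonempty_ringEquiv_Zzeta he with ⟨⟨f⟩⟩ | ⟨⟨f⟩⟩
  · exact isGE_of_ringEquiv f isGE_int
  · exact isGE_of_ringEquiv f EisensteinInt.isGE

lemma unitsRepresent_Zzeta {e : ℕ} (he : e ∈ ({1, 2, 3, 6} : Finset ℕ)) :
    UnitsRepresent (Ideal.span {(2 : Zzeta e)}) := by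
  rcases nonempty_ringEquiv_Zzeta he with ⟨⟨f⟩⟩ | ⟨⟨f⟩⟩
  · exact unitsRepresent_int.of_ringEquiv_span_two f
  · exact EisensteinInt.unitsRepresent.of_ringEquiv_span_two f

end Zzeta

/-! ### Cyclotomic polynomials -/

section Cyclotomic

open Polynomial

lemma aeval_zetaEl_surjective (e : ℕ) : Function.Surjective (aeval (R := ℤ) (zetaEl e)) := by
  rintro ⟨x, hx⟩
  obtain ⟨p, rfl⟩ := (Algebra.adjoin_singleton_eq_range_aeval ℤ (zeta e)).le hx
  exact ⟨p, Subtype.ext (aeval_algHom_apply (Zzeta e).val (zetaEl e) p).symm⟩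

lemma ker_aeval_zetaEl {e : ℕ} (he : 0 < e) :
    RingHom.ker (aeval (R := ℤ) (zetaEl e)) = Ideal.span {cyclotomic e ℤ} := by
  have hprim : IsPrimitiveRoot (zeta e) e := Complex.isPrimitiveRoot_exp e he.ne'
  ext p
  have hval : aeval (zeta e) p = aeval (zetaEl e) p := aeval_algHom_apply (Zzeta e).val (zetaEl e) p
  rw [RingHom.mem_ker, Ideal.mem_span_singleton, cyclotomic_eq_minpoly hprim he,
    ← minpoly.isIntegrallyClosed_dvd_iff (hprim.isIntegral he), hval]
  exact ZeroMemClass.coe_eq_zero.symm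

lemma isRelPrime_cyclotomic {a b : ℕ} (ha : 0 < a) (hb : 0 < b) (hab : a ≠ b) :
    IsRelPrime (cyclotomic a ℤ) (cyclotomic b ℤ) := by
  refine (cyclotomic.irreducible ha).isRelPrime_iff_not_dvd.2 fun hdvd => hab ?_
  exact cyclotomic_injective (eq_of_monic_of_associated (cyclotomic.monic a ℤ)
    (cyclotomic.monic b ℤ)
    ((cyclotomic.irreducible ha).associated_of_dvd (cyclotomic.irreducible hb) hdvd))

lemma iInf_span_cyclotomic {D : Finset ℕ} (hD : ∀ d ∈ D, 0 < d) :
    ⨅ d ∈ D, Ideal.span {cyclotomic d ℤ} = Ideal.span {∏ d ∈ D, cyclotomic d ℤ} := by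
  ext p
  simp only [Submodule.mem_iInf, Ideal.mem_span_singleton]
  have hrel : (D : Set ℕ).Pairwise (Function.onFun IsRelPrime fun d => cyclotomic d ℤ) :=
    fun a ha b hb => isRelPrime_cyclotomic (hD a ha) (hD b hb)
  exact ⟨Finset.prod_dvd_of_isRelPrime hrel,
    fun h d hd => (Finset.dvd_prod_of_mem (cyclotomic · ℤ) hd).trans h⟩

lemma map_aeval_zetaEl_iInf_span_cyclotomic {D : Finset ℕ} (hD : ∀ d ∈ D, 0 < d) (e : ℕ) :
    (⨅ d ∈ D.erase e, Ideal.span {cyclotomic d ℤ}).map (aeval (R := ℤ) (zetaEl e)) =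
      Ideal.span {eta D e} := by
  rw [iInf_span_cyclotomic fun d hd => hD d (Finset.mem_of_mem_erase hd), Ideal.map_span,
    Set.image_singleton, map_prod]
  rfl

lemma iInf_span_cyclotomic_eq_inf_ker {D : Finset ℕ} {e : ℕ} (he : e ∈ D) (hpos : 0 < e) :
    ⨅ d ∈ D, Ideal.span {cyclotomic d ℤ} =
      (⨅ d ∈ D.erase e, Ideal.span {cyclotomic d ℤ}) ⊓
        RingHom.ker (aeval (R := ℤ) (zetaEl e)) := by
  conv_lhs => rw [← Finset.insert_erase he, Finset.iInf_insert]
  rw [ker_aeval_zetaEl hpos, inf_comm]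

end Cyclotomic

end GE2

/-- If `e ∈ D ∩ {1,2,3,6}`, `η_e ℤ[ζ_e] = 2 ℤ[ζ_e]`, and `O(D \ {e})` is a
`GE_2`-ring, then `O(D)` is a `GE_2`-ring. -/
theorem stmt_11 (D : Finset ℕ) (hpos : ∀ d ∈ D, 0 < d) (hcard : 2 ≤ D.card)
    (e : ℕ) (he : e ∈ D) (heS : e ∈ ({1, 2, 3, 6} : Finset ℕ))
    (heta : Ideal.span {eta D e} = Ideal.span {(2 : Zzeta e)})
    (hGE : IsGE (Polynomial ℤ ⧸
      (⨅ d ∈ D.erase e, Ideal.span {Polynomial.cyclotomic d ℤ})) 2) :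
    IsGE (Polynomial ℤ ⧸ (⨅ d ∈ D, Ideal.span {Polynomial.cyclotomic d ℤ})) 2 := by
  let f : Polynomial ℤ →+* Zzeta e := RingHomClass.toRingHom (Polynomial.aeval (zetaEl e))
  rw [GE2.iInf_span_cyclotomic_eq_inf_ker he (hpos e he)]
  have hmap : (⨅ d ∈ D.erase e, Ideal.span {Polynomial.cyclotomic d ℤ}).map f =
      Ideal.span {2} := (GE2.map_aeval_zetaEl_iInf_span_cyclotomic hpos e).trans heta
  refine GE2.isGE_quotient_inf_ker (f := f) (GE2.aeval_zetaEl_surjective e) hGE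
    (GE2.isGE_Zzeta heS) ?_
  rw [hmap]
  exact GE2.congruenceSubgroup_le_relElementarySubgroup (GE2.isGE_Zzeta heS)
    (GE2.unitsRepresent_Zzeta heS)
end
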